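/- Let s ∈ ℝ and let z ∈ ℝ satisfy |z| < (|s| + |1−s|)^{−1} and z < 1/2. Then the series Σ_{ℓ≥0} z^ℓ·E[s^{N_ℓ}] converges absolutely and equals the (absolutely convergent) Gauss hypergeometric series Σ_{m≥0} (Π_{i=0}^{m−1} (i(i+1) − 2s))/(m!·(m+1)!) · (z/(z−1))^m; this series is F(β, 1−β; 2; z/(z−1)) with β = 1/2 + (1/2)√(1+8s), since (β)_m·(1−β)_m = Π_{i=0}^{m−1}(i(i+1) − 2s) and (2)_m·m! = m!·(m+1)!. -/

import Mathlib

/-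
Write `Gₙ = E[s^{Nₙ}]`. Rotate a line about the corner `(1, 0)`, starting from the bottom edge,
until it meets the first of `n + 1` uniform points, say `X`. A shear followed by a scaling, both
fixing `(1, 0)` and the vertical lines, maps `T` onto the part of `T` above this line, keeps the
other points uniform, and replaces `X` by the point `(x, 0)` with `x = X.1`. Then `(x, 0)` is a
vertex, and the remaining vertices are those of the chain from `(x, 0)` to `(0, 1)` spanned by
the points to the left of the line through these two points, which is an affine copy of the
original problem. The number of those points is binomial with parameters `n` and `x`, and a Beta
integral gives `(n+1)(n+2) Gₙ₊₁ = 2s ∑_{k+l=n} (l+1) G_k`.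

The partial sums `Aₙ = G₀ + ⋯ + Gₙ` therefore satisfy a second-order recurrence, which also holds
for the binomial transform of the signed hypergeometric coefficients, so the two sequences agree.
On generating functions, partial sums multiply by `(1-z)⁻¹` and the binomial transform is Euler's
substitution `z ↦ z/(1-z)`, with the same factor. Both `Gₙ` and the hypergeometric coefficients
grow polynomially in `n`, which gives absolute convergence in the whole unit disc.
-/

open MeasureTheory

noncomputable section

/-- The triangle with vertices (0,0), (1,0), (0,1). -/
def T : Set (ℝ × ℝ) := convexHull ℝ {(0, 0), (1, 0), (0, 1)}

/-- The uniform distribution on `T`: twice Lebesgue measure restricted to `T`. -/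
def μT : Measure (ℝ × ℝ) := (2 : ENNReal) • (volume.restrict T)

/-- Joint law of `n` independent uniform points in `T`. -/
def P (n : ℕ) : Measure (Fin n → ℝ × ℝ) := Measure.pi fun _ => μT

/-- The random convex chain: convex hull of the points together with `(1,0)` and `(0,1)`. -/
def Tchain (n : ℕ) (ω : Fin n → ℝ × ℝ) : Set (ℝ × ℝ) :=
  convexHull ℝ (Set.range ω ∪ {(1, 0), (0, 1)})

/-- Normalized area `V_n = 2 vol(T_n)`. -/
def V (n : ℕ) (ω : Fin n → ℝ × ℝ) : ℝ := 2 * (volume (Tchain n ω)).toReal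

/-- Number of vertices of `T_n` other than the two corners. -/
def N (n : ℕ) (ω : Fin n → ℝ × ℝ) : ℕ :=
  (Set.extremePoints ℝ (Tchain n ω)).ncard - 2

/-- Normalized moments `q_{n,k} = C(n+k,k) E[V_n^k]`. -/
def q (n k : ℕ) : ℝ := ((n + k).choose k : ℝ) * ∫ ω, (V n ω) ^ k ∂ P n

/-- Probability generating function of `N_n`. -/
def G (n : ℕ) (t : ℝ) : ℝ := ∫ ω, t ^ (N n ω) ∂ P n

/-- Harmonic number. -/
def H (j : ℕ) : ℝ := ∑ i ∈ Finset.range j, 1 / ((i : ℝ) + 1)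

/-- Generalized harmonic number of order 2. -/
def H2 (j : ℕ) : ℝ := ∑ i ∈ Finset.range j, 1 / ((i : ℝ) + 1) ^ 2

/-- `c(k,ℓ)`: elementary symmetric polynomial `e_k` of `2/(j(j+1))`, `j = 1,…,ℓ`. -/
def c (k l : ℕ) : ℝ :=
  ∑ S ∈ (Finset.Icc 1 l).powersetCard k, ∏ j ∈ S, 2 / ((j : ℝ) * ((j : ℝ) + 1))

section Convexity

open Set Filter Topology

section OrderedField

variable {𝕜 E F : Type*} [Field 𝕜] [LinearOrder 𝕜] [IsStrictOrderedRing 𝕜]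
  [AddCommGroup E] [Module 𝕜 E] [AddCommGroup F] [Module 𝕜 F]

theorem eq_of_mem_openSegment_of_mem_segment {C : Set E} (hC : Convex 𝕜 C) {w u v u' v' : E}
    (hw : w ∉ C) (hu' : u' ∈ C) (hv' : v' ∈ C) (hu : u ∈ segment 𝕜 w u')
    (hv : v ∈ segment 𝕜 w v') (hwuv : w ∈ openSegment 𝕜 u v) : u = w := by
  obtain ⟨a', a, ha', ha, haa, rfl⟩ := hu
  obtain ⟨b', b, -, hb, hbb, rfl⟩ := hv
  obtain ⟨t, t', ht, ht', htt, h⟩ := hwuv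
  have hta : 0 ≤ t * a := by positivity
  have htb : 0 ≤ t' * b := by positivity
  have hcomb : (t * a) • u' + (t' * b) • v' = (t * a + t' * b) • w := by
    have hone : t * a' + t' * b' = 1 - (t * a + t' * b) := by
      linear_combination t * haa + t' * hbb + htt
    have hw_eq : (t * a' + t' * b') • w + ((t * a) • u' + (t' * b) • v') = w := by
      convert h using 1
      module
    rw [hone, sub_smul, one_smul, sub_add_eq_add_sub, sub_eq_iff_eq_add] at hw_eq
    exact add_left_cancel hw_eq
  rcases (add_nonneg hta htb).eq_or_lt with h0 | h0
  · have ha0 : a = 0 := by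
      have : t * a = 0 := by linarith
      exact (mul_eq_zero.1 this).resolve_left ht.ne'
    obtain rfl : a' = 1 := by linarith
    simp [ha0]
  · have hwC := convex_iff_div.1 hC hu' hv' hta htb h0
    rw [div_eq_inv_mul, div_eq_inv_mul, mul_smul _ (t * a), mul_smul _ (t' * b), ← smul_add, hcomb,
      inv_smul_smul₀ h0.ne'] at hwC
    exact absurd hwC hw

theorem extremePoints_convexHull (W : Set E) :
    (convexHull 𝕜 W).extremePoints 𝕜 = {w ∈ W | w ∉ convexHull 𝕜 (W \ {w})} := by
  ext w
  constructor
  · intro h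
    refine ⟨extremePoints_convexHull_subset h, fun hw => ?_⟩
    rw [(convex_convexHull 𝕜 W).mem_extremePoints_iff_mem_sdiff_convexHull_sdiff] at h
    exact h.2 (convexHull_mono (sdiff_subset_sdiff_left (subset_convexHull 𝕜 W)) hw)
  · rintro ⟨hW, hw⟩
    rw [mem_extremePoints_iff_left]
    refine ⟨subset_convexHull 𝕜 W hW, fun u hu v hv hwuv => ?_⟩
    have hWw : insert w (W \ {w}) = W := by
      rw [insert_sdiff_singleton, insert_eq_of_mem hW]
    rcases eq_empty_or_nonempty (W \ {w}) with he | hne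
    · rw [← hWw, he] at hu
      simpa using hu
    · rw [← hWw, convexHull_insert hne, convexJoin_singleton_left, mem_iUnion₂] at hu hv
      obtain ⟨u', hu', hu⟩ := hu
      obtain ⟨v', hv', hv⟩ := hv
      exact eq_of_mem_openSegment_of_mem_segment (convex_convexHull 𝕜 _) hw hu' hv' hu hv hwuv

theorem extremePoints_image_of_injective (f : E →ᵃ[𝕜] F) (hf : Function.Injective f) (A : Set E) :
    (f '' A).extremePoints 𝕜 = f '' A.extremePoints 𝕜 := by
  ext x
  constructor
  · rintro ⟨⟨w, hw, rfl⟩, h⟩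
    refine ⟨w, ⟨hw, fun u hu v hv hwuv => hf (h ⟨u, hu, rfl⟩ ⟨v, hv, rfl⟩ ?_)⟩, rfl⟩
    rw [← image_openSegment]
    exact ⟨w, hwuv, rfl⟩
  · rintro ⟨w, ⟨hw, h⟩, rfl⟩
    refine ⟨⟨w, hw, rfl⟩, ?_⟩
    rintro _ ⟨u, hu, rfl⟩ _ ⟨v, hv, rfl⟩ hwuv
    rw [← image_openSegment, hf.mem_set_image] at hwuv
    rw [h hu hv hwuv]

theorem convexHull_range_eq_image_stdSimplex {ι : Type*} [Fintype ι] (v : ι → E) :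
    convexHull 𝕜 (range v) = Fintype.linearCombination 𝕜 v '' stdSimplex 𝕜 ι := by
  classical
  rw [← convexHull_rangle_single_eq_stdSimplex, LinearMap.image_convexHull, ← range_comp]
  simp only [Function.comp_def, Fintype.linearCombination_apply_single, one_smul]

theorem mem_convexHull_triple {a b c x : E} :
    x ∈ convexHull 𝕜 {a, b, c} ↔ ∃ α β γ : 𝕜, 0 ≤ α ∧ 0 ≤ β ∧ 0 ≤ γ ∧ α + β + γ = 1 ∧
      α • a + β • b + γ • c = x := by
  have hrange : ({a, b, c} : Set E) = range ![a, b, c] := by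
    rw [Matrix.range_cons, Matrix.range_cons_cons_empty]
    rfl
  rw [hrange, convexHull_range_eq_image_stdSimplex]
  constructor
  · rintro ⟨t, ⟨ht0, ht1⟩, rfl⟩
    refine ⟨t 0, t 1, t 2, ht0 0, ht0 1, ht0 2, ?_, ?_⟩
    · rw [← ht1, Fin.sum_univ_three]
    · simp [Fintype.linearCombination_apply, Fin.sum_univ_three]
  · rintro ⟨α, β, γ, hα, hβ, hγ, hsum, rfl⟩
    refine ⟨![α, β, γ], ⟨fun i => by fin_cases i <;> assumption, ?_⟩, ?_⟩
    · simpa [Fin.sum_univ_three] using hsum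
    · simp [Fintype.linearCombination_apply, Fin.sum_univ_three]

theorem mem_of_mem_segment_of_separated {S S₁ : Set E} (l : E →ₗ[𝕜] 𝕜) {c : 𝕜} (hS : Convex 𝕜 S)
    (h₁ : Convex 𝕜 S₁) (hS₁ : S₁ ⊆ S) (hc : S ∩ {x | l x = c} ⊆ S₁) {x y z : E} (hx : x ∈ S₁)
    (hy : y ∈ S) (hz : z ∈ segment 𝕜 x y) (hzy : c ∈ segment 𝕜 (l z) (l y)) : z ∈ S₁ := by
  rw [← LinearMap.coe_toAffineMap, ← image_segment] at hzy
  obtain ⟨p, hp, hpc⟩ := hzy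
  have hpS : p ∈ S := hS.segment_subset (hS.segment_subset (hS₁ hx) hy hz) hy hp
  have hxzp : Wbtw 𝕜 x z p :=
    (mem_segment_iff_wbtw.1 hz).trans_right_left (mem_segment_iff_wbtw.1 hp)
  exact h₁.segment_subset hx (hc ⟨hpS, hpc⟩) (mem_segment_iff_wbtw.2 hxzp)

theorem convex_union_of_separated {S S₁ S₂ : Set E} (l : E →ₗ[𝕜] 𝕜) {c : 𝕜} (hS : Convex 𝕜 S)
    (h₁ : Convex 𝕜 S₁) (h₂ : Convex 𝕜 S₂) (hS₁ : S₁ ⊆ S ∩ {x | l x ≤ c})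
    (hS₂ : S₂ ⊆ S ∩ {x | c ≤ l x}) (hc : S ∩ {x | l x = c} ⊆ S₁ ∩ S₂) :
    Convex 𝕜 (S₁ ∪ S₂) := by
  have mixed : ∀ x ∈ S₁, ∀ y ∈ S₂, segment 𝕜 x y ⊆ S₁ ∪ S₂ := by
    intro x hx y hy z hz
    rcases le_total (l z) c with hzc | hzc
    · refine Or.inl (mem_of_mem_segment_of_separated l hS h₁ (fun _ h => (hS₁ h).1)
        (fun _ h => (hc h).1) hx (hS₂ hy).1 hz ?_)
      rw [segment_eq_Icc (hzc.trans (hS₂ hy).2)]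
      exact ⟨hzc, (hS₂ hy).2⟩
    · refine Or.inr (mem_of_mem_segment_of_separated l hS h₂ (fun _ h => (hS₂ h).1)
        (fun _ h => (hc h).2) hy (hS₁ hx).1 (segment_symm 𝕜 x y ▸ hz) ?_)
      rw [segment_symm, segment_eq_Icc ((hS₁ hx).2.trans hzc)]
      exact ⟨(hS₁ hx).2, hzc⟩
  rw [convex_iff_segment_subset]
  rintro x (hx | hx) y (hy | hy)
  · exact (h₁.segment_subset hx hy).trans subset_union_left
  · exact mixed x hx y hy
  · exact segment_symm 𝕜 x y ▸ mixed y hy x hx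
  · exact (h₂.segment_subset hx hy).trans subset_union_right

end OrderedField

theorem mem_extremePoints_of_mem_nhds {E : Type*} [AddCommGroup E] [Module ℝ E]
    [TopologicalSpace E] [IsTopologicalAddGroup E] [ContinuousSMul ℝ E] {K H : Set E} {w : E}
    (hK : Convex ℝ K) (hH : H ∈ 𝓝 w) (hw : w ∈ (K ∩ H).extremePoints ℝ) :
    w ∈ K.extremePoints ℝ := by
  refine ⟨hw.1.1, fun u hu v hv huv => ?_⟩
  have hnear : ∀ x, ∀ᶠ ε : ℝ in 𝓝[>] 0, AffineMap.homothety w ε x ∈ H := by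
    intro x
    have : Tendsto (fun ε : ℝ => AffineMap.homothety w ε x) (𝓝[>] 0) (𝓝 w) := by
      have hc : Continuous fun ε : ℝ => AffineMap.homothety w ε x := by
        simp only [AffineMap.homothety_apply]
        fun_prop
      simpa using (hc.tendsto 0).mono_left nhdsWithin_le_nhds
    exact this hH
  obtain ⟨ε, ⟨⟨hεu, hεv⟩, hε1⟩, hε0⟩ := (((hnear u).and (hnear v)).and
    (eventually_nhdsWithin_of_eventually_nhds (eventually_le_nhds one_pos))).and
      self_mem_nhdsWithin |>.exists
  have hmem : ∀ x ∈ K, AffineMap.homothety w ε x ∈ K := fun x hx => by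
    rw [AffineMap.homothety_eq_lineMap]
    exact hK.lineMap_mem hw.1.1 hx ⟨le_of_lt hε0, hε1⟩
  have hopen : w ∈ openSegment ℝ (AffineMap.homothety w ε u) (AffineMap.homothety w ε v) := by
    rw [← image_openSegment]
    exact ⟨w, huv, by simp⟩
  have := hw.2 ⟨hmem u hu, hεu⟩ ⟨hmem v hv, hεv⟩ hopen
  have hne : ε ≠ 0 := ne_of_gt hε0
  simpa [AffineMap.homothety_apply, hne, sub_eq_zero] using this

end Convexity

section Measurability

open Set

theorem isClosed_mem_convexHull_range {ι E : Type*} [Finite ι] [AddCommGroup E] [Module ℝ E]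
    [TopologicalSpace E] [IsTopologicalAddGroup E] [ContinuousSMul ℝ E] [T2Space E] :
    IsClosed {p : E × (ι → E) | p.1 ∈ convexHull ℝ (range p.2)} := by
  have := Fintype.ofFinite ι
  have hgraph : IsClosed
      {p : (stdSimplex ℝ ι) × E × (ι → E) | ∑ i, p.1.1 i • p.2.2 i = p.2.1} :=
    isClosed_eq (continuous_finsetSum _ fun i _ => ((continuous_apply i).comp
      (continuous_subtype_val.comp continuous_fst)).smul (by fun_prop)) (by fun_prop)
  convert isClosedMap_snd_of_compactSpace _ hgraph using 1
  ext p
  simp [convexHull_range_eq_image_stdSimplex, Fintype.linearCombination_apply]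

theorem ncard_eq_card_filter_first {ι α : Type*} [Fintype ι] [LinearOrder ι] (v : ι → α)
    {S : Set α} (hS : S ⊆ range v) [DecidablePred fun i => v i ∈ S ∧ ∀ j < i, v j ≠ v i] :
    S.ncard = (Finset.univ.filter fun i => v i ∈ S ∧ ∀ j < i, v j ≠ v i).card := by
  have himage : S = v '' {i | v i ∈ S ∧ ∀ j < i, v j ≠ v i} := by
    refine subset_antisymm (fun w hw => ?_) (image_subset_iff.2 fun i hi => hi.1)
    obtain ⟨i, rfl, hmin⟩ := wellFounded_lt.has_min {i | v i = w} (hS hw)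
    exact ⟨i, ⟨hw, fun j hj hji => hmin j hji hj⟩, rfl⟩
  have hinj : InjOn v {i | v i ∈ S ∧ ∀ j < i, v j ≠ v i} := by
    intro i hi j hj hij
    by_contra hne
    rcases lt_or_gt_of_ne hne with h | h
    · exact hj.2 i h hij
    · exact hi.2 j h hij.symm
  conv_lhs => rw [himage]
  rw [hinj.ncard_image, ← ncard_coe_finset]
  simp

variable {ι E : Type*} [Finite ι] [AddCommGroup E] [Module ℝ E]
    [TopologicalSpace E] [IsTopologicalAddGroup E] [ContinuousSMul ℝ E] [T2Space E]
    [SecondCountableTopology E] [MeasurableSpace E] [BorelSpace E]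

theorem measurableSet_apply_mem_extremePoints_convexHull_range (i : ι) :
    MeasurableSet {v : ι → E | v i ∈ (convexHull ℝ (range v)).extremePoints ℝ} := by
  have hcompl : {v : ι → E | v i ∈ (convexHull ℝ (range v)).extremePoints ℝ} =
      (⋃ J : Set ι, (⋂ j ∈ J, {v | v j ≠ v i}) ∩
        {v | v i ∈ convexHull ℝ (range fun j : J => v j)})ᶜ := by
    ext v
    simp only [extremePoints_convexHull, mem_ofPred_eq, mem_range_self, true_and, mem_compl_iff,
      mem_iUnion, mem_inter_iff, mem_iInter, not_iff_not]
    constructor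
    · refine fun h => ⟨{j | v j ≠ v i}, fun j hj => hj, convexHull_mono ?_ h⟩
      rintro _ ⟨⟨j, rfl⟩, hj⟩
      exact ⟨⟨j, hj⟩, rfl⟩
    · rintro ⟨J, hJ, h⟩
      refine convexHull_mono ?_ h
      rintro _ ⟨j, rfl⟩
      exact ⟨⟨j, rfl⟩, hJ j j.2⟩
  rw [hcompl]
  refine (MeasurableSet.iUnion fun J => .inter (.biInter J.to_countable fun j _ => ?_) ?_).compl
  · exact (measurableSet_eq_fun (measurable_pi_apply j) (measurable_pi_apply i)).compl
  · exact (isClosed_mem_convexHull_range.preimage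
      (f := fun v : ι → E => (v i, fun j : J => v j)) (by fun_prop)).measurableSet

theorem measurable_ncard_extremePoints_convexHull_range :
    Measurable fun v : ι → E => ((convexHull ℝ (range v)).extremePoints ℝ).ncard := by
  classical
  have := Fintype.ofFinite ι
  let := LinearOrder.lift' (Fintype.equivFin ι) (Fintype.equivFin ι).injective
  simp_rw [ncard_eq_card_filter_first _ extremePoints_convexHull_subset, Finset.card_filter]
  refine Finset.measurable_fun_sum _ fun i _ => .ite ?_ measurable_const measurable_const
  have hfirst : MeasurableSet {v : ι → E | ∀ j < i, v j ≠ v i} := by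
    simp only [Set.ofPred_forall]
    exact .iInter fun j => .iInter fun _ =>
      (measurableSet_eq_fun (measurable_pi_apply j) (measurable_pi_apply i)).compl
  exact (measurableSet_apply_mem_extremePoints_convexHull_range i).inter hfirst

end Measurability

section Geometry

open Set Topology

/-- The convex hull of `W` together with the two end points `a` and `b`, so that
`Tchain n ω = chainHull (1, 0) (0, 1) (Set.range ω)`. -/
def chainHull {E : Type*} [AddCommGroup E] [Module ℝ E] (a b : E) (W : Set E) : Set E :=
  convexHull ℝ (W ∪ {a, b})

/-- The number of vertices of `chainHull a b W` beyond the end points `a` and `b`, so that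
`N n ω = chainCount (1, 0) (0, 1) (Set.range ω)`. The subtraction is truncated: the count is
meaningful when `a` and `b` are vertices. -/
def chainCount {E : Type*} [AddCommGroup E] [Module ℝ E] (a b : E) (W : Set E) : ℕ :=
  ((chainHull a b W).extremePoints ℝ).ncard - 2

theorem subset_chainHull {E : Type*} [AddCommGroup E] [Module ℝ E] (a b : E) (W : Set E) :
    insert a (insert b W) ⊆ chainHull a b W := by
  refine subset_trans ?_ (subset_convexHull ℝ _)
  simp

theorem chainHull_image {E F : Type*} [AddCommGroup E] [Module ℝ E] [AddCommGroup F] [Module ℝ F]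
    (f : E →ᵃ[ℝ] F) (a b : E) (W : Set E) :
    chainHull (f a) (f b) (f '' W) = f '' chainHull a b W := by
  rw [chainHull, chainHull, f.image_convexHull, image_union, image_pair]

theorem chainCount_image {E F : Type*} [AddCommGroup E] [Module ℝ E] [AddCommGroup F]
    [Module ℝ F] (f : E →ᵃ[ℝ] F) (hf : Function.Injective f) (a b : E) (W : Set E) :
    chainCount (f a) (f b) (f '' W) = chainCount a b W := by
  rw [chainCount, chainHull_image, extremePoints_image_of_injective f hf,
    ncard_image_of_injective _ hf, chainCount]

theorem chainCount_range_le {E ι : Type*} [AddCommGroup E] [Module ℝ E] [Fintype ι] (a b : E)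
    (v : ι → E) : chainCount a b (range v) ≤ Fintype.card ι := by
  have hsub : (chainHull a b (range v)).extremePoints ℝ ⊆ range v ∪ {a, b} :=
    extremePoints_convexHull_subset
  have hrange : (range v).ncard ≤ Fintype.card ι := by
    rw [← image_univ, ← Nat.card_eq_fintype_card, ← ncard_univ]
    exact ncard_image_le
  have hpair : ({a, b} : Set E).ncard ≤ 2 :=
    (ncard_insert_le a {b}).trans (by rw [ncard_singleton])
  have hunion := ncard_union_le (range v) {a, b}
  have hle := ncard_le_ncard hsub
  rw [chainCount]
  omega

theorem measurable_chainCount_range {ι E : Type*} [Finite ι] [AddCommGroup E] [Module ℝ E]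
    [TopologicalSpace E] [IsTopologicalAddGroup E] [ContinuousSMul ℝ E] [T2Space E]
    [SecondCountableTopology E] [MeasurableSpace E] [BorelSpace E] (a b : E) :
    Measurable fun v : ι → E => chainCount a b (range v) := by
  have hhull : ∀ v : ι → E,
      chainHull a b (range v) = convexHull ℝ (range (Sum.elim v ![a, b])) := fun v => by
    rw [chainHull, Sum.elim_range, Matrix.range_cons_cons_empty]
  have happend : Measurable fun v : ι → E => (Sum.elim v ![a, b] : ι ⊕ Fin 2 → E) := by
    refine measurable_pi_iff.2 fun k => ?_
    cases k <;> simp only [Sum.elim_inl, Sum.elim_inr] <;> fun_prop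
  simp only [chainCount, hhull]
  exact (measurable_from_top (f := fun k : ℕ => k - 2)).comp
    (measurable_ncard_extremePoints_convexHull_range.comp happend)

theorem mem_T_iff {Y : ℝ × ℝ} : Y ∈ T ↔ 0 ≤ Y.1 ∧ 0 ≤ Y.2 ∧ Y.1 + Y.2 ≤ 1 := by
  rw [T, mem_convexHull_triple]
  constructor
  · rintro ⟨α, β, γ, hα, hβ, hγ, hsum, rfl⟩
    simp only [Prod.fst_add, Prod.snd_add, Prod.smul_fst, Prod.smul_snd, smul_eq_mul]
    exact ⟨by linarith, by linarith, by linarith⟩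
  · rintro ⟨h1, h2, h3⟩
    exact ⟨1 - Y.1 - Y.2, Y.1, Y.2, by linarith, h1, h2, by ring, by ext <;> simp⟩

/-- The half-plane to the left of the line through `(x, 0)` and `(0, 1)`. -/
def leftHalfPlane (x : ℝ) : Set (ℝ × ℝ) := {Y | Y.1 + x * Y.2 ≤ x}

theorem convex_leftHalfPlane (x : ℝ) : Convex ℝ (leftHalfPlane x) :=
  convex_halfSpace_le (LinearMap.fst ℝ ℝ ℝ + x • LinearMap.snd ℝ ℝ ℝ).isLinear x

section Peeling

variable {x : ℝ} {W : Set (ℝ × ℝ)}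

theorem mem_segment_of_mem_T_of_eq {Y : ℝ × ℝ} (hY : Y ∈ T) (hYx : Y.1 + x * Y.2 = x) :
    Y ∈ segment ℝ (x, 0) (0, 1) := by
  rw [mem_T_iff] at hY
  refine ⟨1 - Y.2, Y.2, by linarith, hY.2.1, by ring, ?_⟩
  ext
  · simp only [Prod.fst_add, Prod.smul_fst, smul_eq_mul]
    linarith
  · simp

theorem mem_convexHull_triple_of_mem_T_of_le (hx1 : x < 1) {Y : ℝ × ℝ} (hY : Y ∈ T)
    (hYx : x ≤ Y.1 + x * Y.2) : Y ∈ convexHull ℝ {((1 : ℝ), (0 : ℝ)), (x, 0), (0, 1)} := by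
  rw [mem_T_iff] at hY
  have h1x : 0 < 1 - x := sub_pos.2 hx1
  refine mem_convexHull_triple.2 ⟨(Y.1 + x * Y.2 - x) / (1 - x), (1 - Y.1 - Y.2) / (1 - x), Y.2,
    div_nonneg (by linarith) h1x.le, div_nonneg (by linarith) h1x.le, hY.2.1, ?_, ?_⟩
  · field_simp
    ring
  · ext
    · simp only [Prod.fst_add, Prod.smul_fst, smul_eq_mul]
      field_simp
      ring
    · simp

theorem chainHull_insert_subset_T (hx0 : 0 ≤ x) (hx1 : x ≤ 1) (hW : W ⊆ T) :
    chainHull (1, 0) (0, 1) (insert (x, 0) W) ⊆ T := by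
  refine convexHull_min ?_ (convex_convexHull ℝ _)
  simp only [union_subset_iff, insert_subset_iff, singleton_subset_iff, hW, mem_T_iff]
  norm_num [hx0, hx1]

theorem chainHull_left_subset :
    chainHull (x, 0) (0, 1) (W ∩ leftHalfPlane x) ⊆
      chainHull (1, 0) (0, 1) (insert (x, 0) W) := by
  refine convexHull_mono ?_
  intro y
  simp only [mem_union, mem_inter_iff, mem_insert_iff, mem_singleton_iff]
  tauto

theorem chainHull_left_subset_leftHalfPlane :
    chainHull (x, 0) (0, 1) (W ∩ leftHalfPlane x) ⊆ leftHalfPlane x :=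
  convexHull_min (by simp [insert_subset_iff, leftHalfPlane]) (convex_leftHalfPlane x)

theorem T_inter_line_subset_chainHull_left :
    T ∩ {Y | Y.1 + x * Y.2 = x} ⊆ chainHull (x, 0) (0, 1) (W ∩ leftHalfPlane x) := fun _ hY =>
  (convex_convexHull ℝ _).segment_subset (subset_chainHull _ _ _ (by simp))
    (subset_chainHull _ _ _ (by simp)) (mem_segment_of_mem_T_of_eq hY.1 hY.2)

theorem chainHull_insert_subset_union (hx0 : 0 ≤ x) (hx1 : x ≤ 1) (hW : W ⊆ T) :
    chainHull (1, 0) (0, 1) (insert (x, 0) W) ⊆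
      chainHull (x, 0) (0, 1) (W ∩ leftHalfPlane x) ∪ (T ∩ {Y | x ≤ Y.1 + x * Y.2}) := by
  have hconv : Convex ℝ (chainHull (x, 0) (0, 1) (W ∩ leftHalfPlane x) ∪
      (T ∩ {Y | x ≤ Y.1 + x * Y.2})) :=
    convex_union_of_separated (LinearMap.fst ℝ ℝ ℝ + x • LinearMap.snd ℝ ℝ ℝ)
      (convex_convexHull ℝ _) (convex_convexHull ℝ _) ((convex_convexHull ℝ _).inter
        (convex_halfSpace_ge (LinearMap.fst ℝ ℝ ℝ + x • LinearMap.snd ℝ ℝ ℝ).isLinear x))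
      (subset_inter (chainHull_left_subset.trans (chainHull_insert_subset_T hx0 hx1 hW))
        chainHull_left_subset_leftHalfPlane) subset_rfl
      (subset_inter T_inter_line_subset_chainHull_left
        (inter_subset_inter_right _ fun _ hY => (Eq.ge hY :)))
  refine convexHull_min ?_ hconv
  rintro Y ((rfl | hY) | rfl | rfl)
  · exact Or.inl (subset_chainHull _ _ _ (by simp))
  · rcases le_total (Y.1 + x * Y.2) x with h | h
    · exact Or.inl (subset_chainHull _ _ _ (by simp [hY, leftHalfPlane, h]))
    · exact Or.inr ⟨hW hY, h⟩
  · exact Or.inr ⟨mem_T_iff.2 (by norm_num), by simpa using hx1⟩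
  · exact Or.inl (subset_chainHull _ _ _ (by simp))

theorem chainHull_inter_leftHalfPlane (hx0 : 0 ≤ x) (hx1 : x ≤ 1) (hW : W ⊆ T) :
    chainHull (1, 0) (0, 1) (insert (x, 0) W) ∩ leftHalfPlane x =
      chainHull (x, 0) (0, 1) (W ∩ leftHalfPlane x) := by
  refine subset_antisymm ?_
    (subset_inter chainHull_left_subset chainHull_left_subset_leftHalfPlane)
  rintro Y ⟨hYK, hYx⟩
  rcases chainHull_insert_subset_union hx0 hx1 hW hYK with hY | hY
  · exact hY
  · exact T_inter_line_subset_chainHull_left ⟨hY.1, le_antisymm hYx hY.2⟩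

theorem right_corner_mem_extremePoints {K : Set (ℝ × ℝ)} (hK : K ⊆ T) (h : (1, 0) ∈ K) :
    (1, 0) ∈ K.extremePoints ℝ := by
  refine exposedPoints_subset_extremePoints
    ⟨h, ContinuousLinearMap.fst ℝ ℝ ℝ, fun Y hY => ?_⟩
  have hYT := mem_T_iff.1 (hK hY)
  refine ⟨by simpa using by linarith, fun hY1 => ?_⟩
  have hY1' : 1 ≤ Y.1 := hY1
  ext <;> simp <;> linarith

theorem top_corner_mem_extremePoints {K : Set (ℝ × ℝ)} (hK : K ⊆ T) (h : (0, 1) ∈ K) :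
    (0, 1) ∈ K.extremePoints ℝ := by
  refine exposedPoints_subset_extremePoints
    ⟨h, ContinuousLinearMap.snd ℝ ℝ ℝ, fun Y hY => ?_⟩
  have hYT := mem_T_iff.1 (hK hY)
  refine ⟨by simpa using by linarith, fun hY1 => ?_⟩
  have hY1' : 1 ≤ Y.2 := hY1
  ext <;> simp <;> linarith

theorem lowest_left_mem_extremePoints (hx1 : x ≤ 1) (hW : W ⊆ {Y | 0 < Y.2}) :
    (x, 0) ∈ (chainHull (1, 0) (0, 1) (insert (x, 0) W)).extremePoints ℝ := by
  have hconv : Convex ℝ {Y : ℝ × ℝ | 0 < Y.2 ∨ Y.2 = 0 ∧ x ≤ Y.1} := by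
    rw [convex_iff_openSegment_subset]
    rintro Y hY Z hZ _ ⟨a, b, ha, hb, hab, rfl⟩
    simp only [mem_ofPred_eq, Prod.fst_add, Prod.snd_add, Prod.smul_fst, Prod.smul_snd,
      smul_eq_mul] at hY hZ ⊢
    rcases hY with hY | ⟨hY2, hY1⟩ <;> rcases hZ with hZ | ⟨hZ2, hZ1⟩
    · exact Or.inl (by positivity)
    · exact Or.inl (by rw [hZ2]; positivity)
    · exact Or.inl (by rw [hY2]; positivity)
    · exact Or.inr ⟨by simp [hY2, hZ2], by nlinarith⟩
  have hK : chainHull (1, 0) (0, 1) (insert (x, 0) W) ⊆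
      {Y : ℝ × ℝ | 0 < Y.2 ∨ Y.2 = 0 ∧ x ≤ Y.1} := by
    refine convexHull_min ?_ hconv
    rintro Y ((rfl | hY) | rfl | rfl)
    · simp
    · exact Or.inl (hW hY)
    · simpa using hx1
    · simp
  rw [mem_extremePoints_iff_left]
  refine ⟨subset_chainHull _ _ _ (by simp), ?_⟩
  rintro u hu v hv ⟨a, b, ha, hb, hab, h⟩
  have hfst : a * u.1 + b * v.1 = x := congrArg Prod.fst h
  have hsnd : a * u.2 + b * v.2 = 0 := congrArg Prod.snd h
  rcases hK hu with hu2 | ⟨hu2, hu1⟩ <;> rcases hK hv with hv2 | ⟨hv2, hv1⟩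
  · linarith [mul_pos ha hu2, mul_pos hb hv2]
  · simp [hv2, ha.ne', hu2.ne'] at hsnd
  · simp [hu2, hb.ne', hv2.ne'] at hsnd
  · refine Prod.ext (le_antisymm ?_ hu1) hu2
    nlinarith

theorem extremePoints_chainHull_left_subset (hx0 : 0 ≤ x) (hx1 : x ≤ 1) (hW : W ⊆ T)
    (hW0 : W ⊆ {Y | 0 < Y.2}) :
    (chainHull (x, 0) (0, 1) (W ∩ leftHalfPlane x)).extremePoints ℝ ⊆
      (chainHull (1, 0) (0, 1) (insert (x, 0) W)).extremePoints ℝ := by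
  intro w hw
  have hwK := chainHull_left_subset hw.1
  have hKT := chainHull_insert_subset_T hx0 hx1 hW
  have hwx : w.1 + x * w.2 ≤ x := chainHull_left_subset_leftHalfPlane hw.1
  rcases hwx.lt_or_eq with hlt | heq
  · refine mem_extremePoints_of_mem_nhds (H := leftHalfPlane x) (convex_convexHull ℝ _) ?_ ?_
    · have hopen : IsOpen {Y : ℝ × ℝ | Y.1 + x * Y.2 < x} :=
        isOpen_lt (by fun_prop) continuous_const
      exact Filter.mem_of_superset (hopen.mem_nhds hlt)
        fun Y (hY : Y.1 + x * Y.2 < x) => show Y.1 + x * Y.2 ≤ x from hY.le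
    · exact (chainHull_inter_leftHalfPlane hx0 hx1 hW).symm ▸ hw
  · rcases (mem_extremePoints_iff_forall_segment.1 hw).2 (x, 0) (subset_chainHull _ _ _ (by simp))
      (0, 1) (subset_chainHull _ _ _ (by simp)) (mem_segment_of_mem_T_of_eq (hKT hwK) heq)
      with rfl | rfl
    · exact lowest_left_mem_extremePoints hx1 hW0
    · exact top_corner_mem_extremePoints hKT hwK

theorem ends_subset_extremePoints_chainHull_left (hx0 : 0 ≤ x) (hx1 : x ≤ 1) (hW : W ⊆ T)
    (hW0 : W ⊆ {Y | 0 < Y.2}) :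
    {(x, 0), (0, 1)} ⊆ (chainHull (x, 0) (0, 1) (W ∩ leftHalfPlane x)).extremePoints ℝ := by
  have hgen : insert (1, 0) (insert (0, 1) (insert (x, 0) W)) ⊆
      chainHull (1, 0) (0, 1) (insert (x, 0) W) := subset_chainHull _ _ _
  refine subset_trans (subset_inter ?_ ?_)
    (inter_extremePoints_subset_extremePoints_of_subset chainHull_left_subset)
  · exact subset_trans (by simp [insert_subset_iff]) (subset_chainHull _ _ _)
  · refine insert_subset (lowest_left_mem_extremePoints hx1 hW0) (singleton_subset_iff.2 ?_)
    exact top_corner_mem_extremePoints (chainHull_insert_subset_T hx0 hx1 hW) (hgen (by simp))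

theorem extremePoints_chainHull_insert (hx0 : 0 ≤ x) (hx1 : x < 1) (hW : W ⊆ T)
    (hW0 : W ⊆ {Y | 0 < Y.2}) :
    (chainHull (1, 0) (0, 1) (insert (x, 0) W)).extremePoints ℝ =
      insert (1, 0) ((chainHull (x, 0) (0, 1) (W ∩ leftHalfPlane x)).extremePoints ℝ) := by
  have hKT := chainHull_insert_subset_T hx0 hx1.le hW
  have hgen : insert (1, 0) (insert (0, 1) (insert (x, 0) W)) ⊆
      chainHull (1, 0) (0, 1) (insert (x, 0) W) := subset_chainHull _ _ _
  refine subset_antisymm (fun w hw => ?_) (insert_subset ?_ ?_)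
  · rcases chainHull_insert_subset_union hx0 hx1.le hW hw.1 with hw' | ⟨hwT, hwx⟩
    · exact Or.inr (inter_extremePoints_subset_extremePoints_of_subset chainHull_left_subset
        ⟨hw', hw⟩)
    · have hcorner : w ∈ ({(1, 0), (x, 0), (0, 1)} : Set (ℝ × ℝ)) :=
        extremePoints_convexHull_subset <| inter_extremePoints_subset_extremePoints_of_subset
          (convexHull_min (subset_trans (by simp [insert_subset_iff]) hgen) (convex_convexHull ℝ _))
          ⟨mem_convexHull_triple_of_mem_T_of_le hx1 hwT hwx, hw⟩
      exact hcorner.imp_right fun h =>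
        ends_subset_extremePoints_chainHull_left hx0 hx1.le hW hW0 h
  · exact right_corner_mem_extremePoints hKT (hgen (by simp))
  · exact extremePoints_chainHull_left_subset hx0 hx1.le hW hW0

theorem chainCount_insert (hx0 : 0 ≤ x) (hx1 : x < 1) (hW : W ⊆ T)
    (hW0 : W ⊆ {Y | 0 < Y.2}) (hfin : W.Finite) :
    chainCount (1, 0) (0, 1) (insert (x, 0) W) =
      chainCount (x, 0) (0, 1) (W ∩ leftHalfPlane x) + 1 := by
  set V' := (chainHull (x, 0) (0, 1) (W ∩ leftHalfPlane x)).extremePoints ℝ with hV'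
  have hV := extremePoints_chainHull_insert hx0 hx1 hW hW0
  have hfin' : V'.Finite :=
    ((hfin.inter_of_left _).union (by simp)).subset extremePoints_convexHull_subset
  have hnot : (1, 0) ∉ V' := fun h => by
    have : (1 : ℝ) + x * 0 ≤ x := chainHull_left_subset_leftHalfPlane h.1
    linarith
  have htwo : 2 ≤ V'.ncard := by
    rw [← ncard_pair (a := (x, (0 : ℝ))) (b := (0, 1)) (by simp)]
    exact ncard_le_ncard (ends_subset_extremePoints_chainHull_left hx0 hx1.le hW hW0) hfin'
  rw [chainCount, chainCount, hV, ncard_insert_of_notMem hnot hfin', ← hV']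
  omega

end Peeling

end Geometry

section PointProcess

open Set ENNReal
open Finset.HasAntidiagonal (antidiagonal)

variable {E : Type*} [MeasurableSpace E]

/-- A function of point configurations that depends measurably on the points of finite
configurations, these being encoded as ranges of finite families. -/
def MeasurableOnRanges (F : Set E → ℝ≥0∞) : Prop :=
  ∀ (ι : Type) [Finite ι], Measurable fun v : ι → E => F (range v)

namespace MeasurableOnRanges

variable {F : Set E → ℝ≥0∞}

theorem measurable_insert (hF : MeasurableOnRanges F) (ι : Type) [Finite ι] :
    Measurable fun p : E × (ι → E) => F (insert p.1 (range p.2)) := by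
  have hcons : Measurable fun p : E × (ι → E) => (Sum.elim (fun _ => p.1) p.2 : Unit ⊕ ι → E) := by
    refine measurable_pi_iff.2 fun k => ?_
    cases k <;> simp only [Sum.elim_inl, Sum.elim_inr] <;> fun_prop
  convert (hF (Unit ⊕ ι)).comp hcons using 2 with p
  rw [Function.comp_apply, Sum.elim_range, range_const, singleton_union]

theorem insert (hF : MeasurableOnRanges F) (x : E) :
    MeasurableOnRanges fun S => F (insert x S) := fun ι _ =>
  (hF.measurable_insert ι).comp measurable_prodMk_left

theorem inter (hF : MeasurableOnRanges F) {D : Set E} (hD : MeasurableSet D) :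
    MeasurableOnRanges fun S => F (S ∩ D) := by
  classical
  intro ι _ B hB
  have hcover : (fun v : ι → E => F (range v ∩ D)) ⁻¹' B =
      ⋃ J : Set ι, {v | ∀ i, v i ∈ D ↔ i ∈ J} ∩ {v | F (range fun i : J => v i) ∈ B} := by
    ext v
    have hrange : ∀ J : Set ι, (∀ i, v i ∈ D ↔ i ∈ J) →
        range v ∩ D = range fun i : J => v i := fun J hJ => by
      ext y
      simp only [mem_inter_iff, mem_range, Subtype.exists]
      constructor
      · rintro ⟨⟨i, rfl⟩, hi⟩
        exact ⟨i, (hJ i).1 hi, rfl⟩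
      · rintro ⟨i, hi, rfl⟩
        exact ⟨⟨i, rfl⟩, (hJ i).2 hi⟩
    simp only [mem_preimage, mem_iUnion, mem_inter_iff, mem_ofPred_eq]
    constructor
    · exact fun h => ⟨{i | v i ∈ D}, fun _ => Iff.rfl, hrange {i | v i ∈ D} (fun _ => Iff.rfl) ▸ h⟩
    · rintro ⟨J, hJ, h⟩
      rwa [hrange J hJ]
  rw [hcover]
  refine .iUnion fun J => .inter ?_ ?_
  · simp only [Set.ofPred_forall]
    refine .iInter fun i => ?_
    exact ((measurable_pi_apply i) hD).iff (.const _)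
  · exact (hF J).comp (measurable_pi_lambda _ fun i => measurable_pi_apply _) hB

end MeasurableOnRanges

theorem lintegral_pi_insertNth (μ : Measure E) [SigmaFinite μ] {n : ℕ} (j : Fin (n + 1))
    {Φ : (Fin (n + 1) → E) → ℝ≥0∞} (hΦ : Measurable Φ) :
    ∫⁻ ω, Φ ω ∂Measure.pi (fun _ => μ) =
      ∫⁻ X, ∫⁻ ω, Φ (j.insertNth X ω) ∂Measure.pi (fun _ => μ) ∂μ := by
  have hmp := (measurePreserving_piFinSuccAbove (fun _ : Fin (n + 1) => μ) j).symm
  rw [← hmp.lintegral_comp_emb (MeasurableEquiv.measurableEmbedding _)]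
  exact lintegral_prod _ (hΦ.comp (MeasurableEquiv.measurable _)).aemeasurable

theorem lintegral_pi_range_succ (μ : Measure E) [SigmaFinite μ] {F : Set E → ℝ≥0∞}
    (hF : MeasurableOnRanges F) (n : ℕ) :
    ∫⁻ ω, F (range ω) ∂Measure.pi (fun _ : Fin (n + 1) => μ) =
      ∫⁻ X, ∫⁻ ω, F (insert X (range ω)) ∂Measure.pi (fun _ : Fin n => μ) ∂μ := by
  rw [lintegral_pi_insertNth μ 0 (hF _)]
  simp only [Fin.range_insertNth]
  rfl

theorem lintegral_pi_range_inter_succ (μ : Measure E) [SigmaFinite μ] {D : Set E}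
    (hD : MeasurableSet D) {F : Set E → ℝ≥0∞} (hF : MeasurableOnRanges F) (n : ℕ) :
    ∫⁻ ω, F (range ω ∩ D) ∂Measure.pi (fun _ : Fin (n + 1) => μ) =
      μ Dᶜ * ∫⁻ ω, F (range ω ∩ D) ∂Measure.pi (fun _ : Fin n => μ) +
      ∫⁻ X in D, ∫⁻ ω, F (insert X (range ω ∩ D)) ∂Measure.pi (fun _ : Fin n => μ) ∂μ := by
  rw [lintegral_pi_range_succ μ (hF.inter hD), add_comm, ← lintegral_add_compl _ hD]
  congr 1
  · exact setLIntegral_congr_fun hD fun X hX => by simp only [insert_inter_of_mem hX]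
  · rw [mul_comm, ← setLIntegral_const]
    exact setLIntegral_congr_fun hD.compl fun X hX => by simp only [insert_inter_of_notMem hX]

theorem lintegral_pi_range_inter (μ : Measure E) [SigmaFinite μ] {D : Set E} (hD : MeasurableSet D)
    {F : Set E → ℝ≥0∞} (hF : MeasurableOnRanges F) (n : ℕ) :
    ∫⁻ ω, F (range ω ∩ D) ∂Measure.pi (fun _ : Fin n => μ) =
      ∑ p ∈ antidiagonal n, (n.choose p.1 : ℝ≥0∞) * (μ Dᶜ ^ p.2 *
        ∫⁻ u, F (range u) ∂Measure.pi (fun _ : Fin p.1 => μ.restrict D)) := by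
  induction n generalizing F with
  | zero => simp [lintegral_unique]
  | succ n ih =>
    have hmeas : ∀ k, Measurable fun X : E =>
        ∫⁻ u, F (insert X (range u)) ∂Measure.pi (fun _ : Fin k => μ.restrict D) := fun k =>
      (hF.measurable_insert (Fin k)).lintegral_prod_right'
    have hinside : ∫⁻ X in D, ∫⁻ ω, F (insert X (range ω ∩ D)) ∂Measure.pi (fun _ : Fin n => μ) ∂μ =
        ∑ p ∈ antidiagonal n, (n.choose p.2 : ℝ≥0∞) * (μ Dᶜ ^ p.2 *
          ∫⁻ u, F (range u) ∂Measure.pi (fun _ : Fin (p.1 + 1) => μ.restrict D)) := by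
      simp only [fun X => ih (hF.insert X)]
      rw [lintegral_finsetSum _ fun p _ => ((hmeas p.1).const_mul _).const_mul _]
      refine Finset.sum_congr rfl fun p hp => ?_
      rw [lintegral_const_mul _ ((hmeas p.1).const_mul _), lintegral_const_mul _ (hmeas p.1),
        ← lintegral_pi_range_succ _ hF,
        Nat.choose_symm_of_eq_add (Finset.HasAntidiagonal.mem_antidiagonal.1 hp).symm]
    rw [lintegral_pi_range_inter_succ μ hD hF, ih hF, hinside,
      Finset.sum_antidiagonal_choose_succ_mul fun k l =>
        μ Dᶜ ^ l * ∫⁻ u, F (range u) ∂Measure.pi (fun _ : Fin k => μ.restrict D), Finset.mul_sum]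
    refine congrArg₂ _ (Finset.sum_congr rfl fun p _ => ?_) rfl
    ring

theorem lintegral_pi_range_of_restrict_eq_map (μ : Measure E) [SigmaFinite μ] {D : Set E}
    {g : E → E} (hg : Measurable g) {c : ℝ≥0∞} (hD : μ.restrict D = c • μ.map g) {F : Set E → ℝ≥0∞}
    (hF : MeasurableOnRanges F) (k : ℕ) :
    ∫⁻ u, F (range u) ∂Measure.pi (fun _ : Fin k => μ.restrict D) =
      c ^ k * ∫⁻ u, F (g '' range u) ∂Measure.pi (fun _ : Fin k => μ) := by
  have hcomp : Measurable fun (v : Fin k → E) i => g (v i) := by fun_prop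
  have hpi : Measure.pi (fun _ : Fin k => μ.restrict D) =
      c ^ k • (Measure.pi fun _ : Fin k => μ).map fun v i => g (v i) := by
    refine Measure.pi_eq fun s hs => ?_
    have hpre : (fun (v : Fin k → E) i => g (v i)) ⁻¹' univ.pi s = univ.pi fun i => g ⁻¹' s i := by
      ext
      simp
    rw [Measure.smul_apply, Measure.map_apply hcomp (.univ_pi hs), hpre, Measure.pi_pi, hD]
    simp [Finset.prod_mul_distrib, Measure.map_apply hg, hs]
  rw [hpi, lintegral_smul_measure, lintegral_map (hF _) hcomp, smul_eq_mul]
  simp only [← range_comp, Function.comp_def]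

section Minimum

theorem sum_indicator_min {ι β α M : Type*} [Fintype ι] [Nonempty ι] [LinearOrder α]
    [AddCommMonoid M] {φ : β → α} {ω : ι → β} (hω : Function.Injective (φ ∘ ω)) (Φ : (ι → β) → M) :
    ∑ j, {ω | ∀ i, φ (ω j) ≤ φ (ω i)}.indicator Φ ω = Φ ω := by
  obtain ⟨j, hj⟩ := Finite.exists_min (φ ∘ ω)
  rw [Finset.sum_eq_single j, indicator_of_mem (by exact hj)]
  · exact fun i _ hij => indicator_of_notMem
      (fun (hi : ∀ k, φ (ω i) ≤ φ (ω k)) => hij (hω (le_antisymm (hi j) (hj i)))) _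
  · simp

variable {α : Type*} [LinearOrder α] [TopologicalSpace α] [OrderClosedTopology α]
  [SecondCountableTopology α] [MeasurableSpace α] [BorelSpace α] {μ : Measure E} [SigmaFinite μ]
  {φ : E → α}

theorem ae_injective_comp_pi (hφ : Measurable φ) (hfib : ∀ t, μ (φ ⁻¹' {t}) = 0) (n : ℕ) :
    ∀ᵐ ω ∂Measure.pi (fun _ : Fin (n + 1) => μ), Function.Injective (φ ∘ ω) := by
  have hpair : ∀ j i, i ≠ j → ∀ᵐ ω ∂Measure.pi (fun _ : Fin (n + 1) => μ), φ (ω i) ≠ φ (ω j) := by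
    intro j i hij
    obtain ⟨k, rfl⟩ := Fin.exists_succAbove_eq hij
    have hmeas : MeasurableSet {ω : Fin (n + 1) → E | φ (ω (j.succAbove k)) = φ (ω j)} :=
      measurableSet_eq_fun (by fun_prop) (by fun_prop)
    simp only [ae_iff, not_not]
    rw [← lintegral_indicator_one hmeas,
      lintegral_pi_insertNth μ j (measurable_one.indicator hmeas)]
    refine lintegral_eq_zero_of_ae_eq_zero (Filter.Eventually.of_forall fun X => ?_)
    have hnull : Measure.pi (fun _ : Fin n => μ) {ω | φ (ω k) = φ X} = 0 :=
      Measure.pi_eval_preimage_null (fun _ => μ) (hfib (φ X))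
    refine lintegral_eq_zero_of_ae_eq_zero ?_
    filter_upwards [compl_mem_ae_iff.2 hnull] with ω hω
    exact indicator_of_notMem (by simpa using hω) _
  have hall : ∀ᵐ ω ∂Measure.pi (fun _ : Fin (n + 1) => μ), ∀ j i, i ≠ j → φ (ω i) ≠ φ (ω j) :=
    ae_all_iff.2 fun j => ae_all_iff.2 fun i => by
      by_cases hij : i = j
      · simp [hij]
      · simpa [hij] using hpair j i hij
  filter_upwards [hall] with ω hω i j hij
  by_contra hne
  exact hω j i hne hij

theorem lintegral_pi_range_eq_mul_lintegral_min (hφ : Measurable φ)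
    (hfib : ∀ t, μ (φ ⁻¹' {t}) = 0) {F : Set E → ℝ≥0∞} (hF : MeasurableOnRanges F) (n : ℕ) :
    ∫⁻ ω, F (range ω) ∂Measure.pi (fun _ : Fin (n + 1) => μ) =
      (n + 1) * ∫⁻ X, ∫⁻ ω in univ.pi fun _ => {Y | φ X ≤ φ Y}, F (insert X (range ω))
        ∂Measure.pi (fun _ : Fin n => μ) ∂μ := by
  have hmin : ∀ j : Fin (n + 1), MeasurableSet {ω : Fin (n + 1) → E | ∀ i, φ (ω j) ≤ φ (ω i)} := by
    intro j
    simp only [Set.ofPred_forall]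
    exact .iInter fun i => measurableSet_le (by fun_prop) (by fun_prop)
  have hterm : ∀ j : Fin (n + 1),
      ∫⁻ ω, {ω | ∀ i, φ (ω j) ≤ φ (ω i)}.indicator (fun ω => F (range ω)) ω
        ∂Measure.pi (fun _ : Fin (n + 1) => μ) =
      ∫⁻ X, ∫⁻ ω in univ.pi fun _ => {Y | φ X ≤ φ Y}, F (insert X (range ω))
        ∂Measure.pi (fun _ : Fin n => μ) ∂μ := by
    intro j
    rw [lintegral_pi_insertNth μ j ((hF _).indicator (hmin j))]
    refine lintegral_congr fun X => ?_
    rw [← lintegral_indicator (.univ_pi fun _ => measurableSet_le measurable_const hφ)]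
    refine lintegral_congr fun ω => ?_
    classical
    simp only [Fin.forall_iff_succAbove j, le_refl, true_and, indicator_apply, mem_ofPred_eq,
      Fin.insertNth_apply_same, Fin.insertNth_apply_succAbove, Fin.range_insertNth, mem_pi,
      mem_univ, forall_const]
    rfl
  rw [lintegral_congr_ae ((ae_injective_comp_pi hφ hfib n).mono fun ω hω =>
      (sum_indicator_min hω fun ω => F (range ω)).symm),
    lintegral_finsetSum _ fun j _ => (hF _).indicator (hmin j)]
  simp [hterm]

end Minimum

end PointProcess

section Triangle

open Set ENNReal

section AffineMap

variable {E : Type*} [NormedAddCommGroup E] [NormedSpace ℝ E] [FiniteDimensional ℝ E]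
  {f : E →ᵃ[ℝ] E}

theorem injective_affineMap_of_det_ne_zero (hf : LinearMap.det f.linear ≠ 0) :
    Function.Injective f :=
  f.linear_injective_iff.1 ((LinearMap.equivOfDetNeZero f.linear hf).injective)

variable [MeasurableSpace E] [BorelSpace E] (μ : Measure E) [μ.IsAddHaarMeasure]

theorem map_affineMap_addHaar (hf : LinearMap.det f.linear ≠ 0) :
    μ.map f = ENNReal.ofReal |(LinearMap.det f.linear)⁻¹| • μ := by
  have hcomp : ⇑f = (fun X => X + f 0) ∘ f.linear := funext fun X => by
    simp [f.decomp']
  have hlin : Measurable f.linear := f.linear.continuous_of_finiteDimensional.measurable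
  rw [hcomp, ← Measure.map_map (measurable_add_const _) hlin,
    Measure.map_linearMap_addHaar_eq_smul_addHaar μ hf, Measure.map_smul, map_add_right_eq_self]

theorem restrict_restrict_eq_map_affineMap (hf : LinearMap.det f.linear ≠ 0) {S D : Set E}
    (hD : MeasurableSet D) (hfS : f '' S = D ∩ S) :
    (μ.restrict S).restrict D =
      ENNReal.ofReal |LinearMap.det f.linear| • (μ.restrict S).map f := by
  have hinj := injective_affineMap_of_det_ne_zero hf
  have hemb : MeasurableEmbedding f :=
    f.continuous_of_finiteDimensional.measurableEmbedding hinj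
  have hmap : (μ.restrict S).map f =
      ENNReal.ofReal |(LinearMap.det f.linear)⁻¹| • μ.restrict (f '' S) := by
    rw [← Measure.restrict_smul, ← map_affineMap_addHaar μ hf, hemb.restrict_map,
      preimage_image_eq _ hinj]
  rw [Measure.restrict_restrict hD, ← hfS, hmap, smul_smul, ← ENNReal.ofReal_mul (abs_nonneg _),
    ← abs_mul, mul_inv_cancel₀ hf, abs_one, ENNReal.ofReal_one, one_smul]

end AffineMap

section Uniform

theorem measurableSet_T : MeasurableSet T :=
  (Set.Finite.isCompact_convexHull (𝕜 := ℝ) (by simp)).measurableSet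

theorem lintegral_μT {g : ℝ × ℝ → ℝ≥0∞} (hg : Measurable g) :
    ∫⁻ X, g X ∂μT = 2 * ∫⁻ x in Ioc (0 : ℝ) 1, ∫⁻ y in Ioc 0 (1 - x), g (x, y) := by
  have hgT : Measurable (T.indicator g) := hg.indicator measurableSet_T
  rw [μT, lintegral_smul_measure, ← lintegral_indicator measurableSet_T, Measure.volume_eq_prod,
    lintegral_prod _ hgT.aemeasurable, smul_eq_mul, ← lintegral_indicator measurableSet_Ioc]
  congr 1
  refine lintegral_congr_ae ?_
  filter_upwards [Measure.ae_ne volume 0] with x hx0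
  by_cases hx : x ∈ Ioc 0 1
  · rw [indicator_of_mem hx, ← lintegral_indicator measurableSet_Ioc]
    refine lintegral_congr_ae ?_
    filter_upwards [Measure.ae_ne volume 0] with y hy0
    have hmem : (x, y) ∈ T ↔ y ∈ Ioc 0 (1 - x) := by
      rw [mem_T_iff, mem_Ioc, lt_iff_le_and_ne, le_sub_iff_add_le']
      simp [hx.1.le, hy0.symm]
    classical
    simp only [indicator_apply, hmem]
  · rw [indicator_of_notMem hx]
    refine lintegral_eq_zero_of_ae_eq_zero (Filter.Eventually.of_forall fun y => ?_)
    refine indicator_of_notMem (fun hT => hx ?_) _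
    obtain ⟨hx_nonneg, hy, hxy⟩ := mem_T_iff.1 hT
    exact ⟨lt_of_le_of_ne hx_nonneg hx0.symm, (le_add_of_nonneg_right hy).trans hxy⟩

theorem lintegral_Ioc_ofReal {a b : ℝ} (hab : a ≤ b) {f : ℝ → ℝ}
    (hf : IntervalIntegrable f volume a b) (h0 : ∀ x ∈ Ioc a b, 0 ≤ f x) :
    ∫⁻ x in Ioc a b, ENNReal.ofReal (f x) = ENNReal.ofReal (∫ x in a..b, f x) := by
  rw [intervalIntegral.integral_of_le hab, ofReal_integral_eq_lintegral_ofReal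
    ((intervalIntegrable_iff_integrableOn_Ioc_of_le hab).1 hf)
    ((ae_restrict_mem measurableSet_Ioc).mono h0)]

theorem integral_pow_mul_one_sub_pow (k l : ℕ) :
    ∫ x in (0 : ℝ)..1, x ^ k * (1 - x) ^ l =
      (k.factorial * l.factorial : ℝ) / (k + l + 1).factorial := by
  induction l generalizing k with
  | zero =>
    simp only [pow_zero, mul_one, integral_pow, one_pow, ne_eq, Nat.add_eq_zero_iff, one_ne_zero,
      and_false, not_false_eq_true, zero_pow, sub_zero, one_div, Nat.factorial_zero, Nat.cast_one,
      add_zero, Nat.factorial_succ, Nat.cast_mul, Nat.cast_add]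
    field_simp
  | succ l ih =>
    have hsplit : ∀ x : ℝ, x ^ k * (1 - x) ^ (l + 1) =
        x ^ k * (1 - x) ^ l - x ^ (k + 1) * (1 - x) ^ l := fun x => by ring
    have hint : ∀ j : ℕ,
        IntervalIntegrable (fun x : ℝ => x ^ j * (1 - x) ^ l) volume 0 1 := fun j =>
      Continuous.intervalIntegrable (by fun_prop) _ _
    simp only [hsplit]
    rw [intervalIntegral.integral_sub (hint _) (hint _), ih, ih,
      show k + 1 + l + 1 = k + l + 1 + 1 by ring, show k + (l + 1) + 1 = k + l + 1 + 1 by ring,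
      Nat.factorial_succ (k + l + 1), Nat.factorial_succ k, Nat.factorial_succ l]
    push_cast
    field_simp
    ring

theorem integral_one_sub_div_pow (a : ℝ) (n : ℕ) :
    ∫ y in (0 : ℝ)..a, (1 - y / a) ^ n = a / (n + 1) := by
  rcases eq_or_ne a 0 with rfl | ha
  · simp
  · rw [intervalIntegral.integral_comp_sub_div (fun y => y ^ n) ha]
    simp [ha, div_eq_mul_inv]

/-- The slope of `Y` seen from the corner `(1, 0)`, up to sign (with junk value `0` when
`Y.1 = 1`). -/
def cornerSlope (Y : ℝ × ℝ) : ℝ := Y.2 / (1 - Y.1)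

theorem measurable_cornerSlope : Measurable cornerSlope := by
  unfold cornerSlope
  fun_prop

theorem lintegral_μT_pow_mul_cornerSlope (k l n : ℕ) :
    ∫⁻ X, ENNReal.ofReal (X.1 ^ k * (1 - X.1) ^ l * (1 - cornerSlope X) ^ n) ∂μT =
      ENNReal.ofReal
        (2 / (n + 1) * ((k.factorial * (l + 1).factorial) / (k + (l + 1) + 1).factorial)) := by
  have hinner : ∀ x ∈ Ioc (0 : ℝ) 1,
      ∫⁻ y in Ioc 0 (1 - x), ENNReal.ofReal (x ^ k * (1 - x) ^ l * (1 - y / (1 - x)) ^ n) =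
        ENNReal.ofReal (x ^ k * (1 - x) ^ (l + 1) / (n + 1)) := fun x hx => by
    have hx1 : 0 ≤ 1 - x := sub_nonneg.2 hx.2
    rw [lintegral_Ioc_ofReal hx1 (Continuous.intervalIntegrable (by fun_prop) _ _) fun y hy =>
        mul_nonneg (mul_nonneg (pow_nonneg hx.1.le k) (pow_nonneg hx1 l))
          (pow_nonneg (sub_nonneg.2 (div_le_one_of_le₀ hy.2 hx1)) n),
      intervalIntegral.integral_const_mul, integral_one_sub_div_pow]
    congr 1
    ring
  have hmeas := measurable_cornerSlope
  rw [lintegral_μT (by fun_prop)]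
  simp only [cornerSlope]
  rw [setLIntegral_congr_fun measurableSet_Ioc hinner, lintegral_Ioc_ofReal zero_le_one
      (Continuous.intervalIntegrable (by fun_prop) _ _) fun x hx =>
        div_nonneg (mul_nonneg (pow_nonneg hx.1.le k) (pow_nonneg (sub_nonneg.2 hx.2) _))
          (by positivity),
    intervalIntegral.integral_div, integral_pow_mul_one_sub_pow, ← ENNReal.ofReal_ofNat 2,
    ← ENNReal.ofReal_mul zero_le_two]
  congr 1
  ring

instance : IsProbabilityMeasure μT := ⟨by
  simpa using lintegral_μT_pow_mul_cornerSlope 0 0 0⟩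

theorem ae_μT_mem_T : ∀ᵐ X ∂μT, X ∈ T :=
  Measure.ae_smul_measure (ae_restrict_mem measurableSet_T) _

theorem μT_absolutelyContinuous : μT ≪ volume :=
  Measure.AbsolutelyContinuous.smul_left Measure.restrict_le_self.absolutelyContinuous _

theorem ae_μT_snd_pos : ∀ᵐ X ∂μT, 0 < X.2 := by
  have hne : ∀ᵐ X : ℝ × ℝ, X.2 ≠ 0 :=
    Measure.quasiMeasurePreserving_snd.ae (Measure.ae_ne volume 0)
  filter_upwards [ae_μT_mem_T, μT_absolutelyContinuous.ae_le hne] with X hX h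
  exact lt_of_le_of_ne (mem_T_iff.1 hX).2.1 h.symm

theorem ae_μT_fst_mem_Ioo : ∀ᵐ X ∂μT, X.1 ∈ Ioo 0 1 := by
  have hne : ∀ᵐ X : ℝ × ℝ, X.1 ≠ 0 :=
    Measure.quasiMeasurePreserving_fst.ae (Measure.ae_ne volume 0)
  filter_upwards [ae_μT_mem_T, ae_μT_snd_pos, μT_absolutelyContinuous.ae_le hne] with X hX h2 h1
  obtain ⟨hX1, -, hsum⟩ := mem_T_iff.1 hX
  exact ⟨lt_of_le_of_ne hX1 h1.symm, by linarith⟩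

theorem μT_cornerSlope_fiber (t : ℝ) : μT (cornerSlope ⁻¹' {t}) = 0 := by
  refine μT_absolutelyContinuous ?_
  rw [Measure.volume_eq_prod,
    Measure.measure_prod_null (measurable_cornerSlope (measurableSet_singleton t))]
  filter_upwards [Measure.ae_ne volume 1] with x hx
  refine measure_mono_null (t := {t * (1 - x)}) (fun y hy => ?_) (by simp)
  exact (div_eq_iff (sub_ne_zero.2 hx.symm)).1 hy

/-- The affine map of the plane with linear part `Y ↦ (a * Y.1, c * Y.1 + d * Y.2)` and
translation part `v`. -/
def lowerTriangularMap (a c d : ℝ) (v : ℝ × ℝ) : ℝ × ℝ →ᵃ[ℝ] ℝ × ℝ :=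
  (Matrix.toLin (.finTwoProd ℝ) (.finTwoProd ℝ) !![a, 0; c, d]).toAffineMap + AffineMap.const ℝ _ v

theorem lowerTriangularMap_apply (a c d : ℝ) (v Y : ℝ × ℝ) :
    lowerTriangularMap a c d v Y = (a * Y.1 + v.1, c * Y.1 + d * Y.2 + v.2) := by
  simp [lowerTriangularMap, Matrix.toLin_finTwoProd_apply, Prod.ext_iff]

theorem det_lowerTriangularMap (a c d : ℝ) (v : ℝ × ℝ) :
    LinearMap.det (lowerTriangularMap a c d v).linear = a * d := by
  simp [lowerTriangularMap, LinearMap.det_toLin]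

theorem injective_lowerTriangularMap {a d : ℝ} (ha : a ≠ 0) (hd : d ≠ 0) (c : ℝ) (v : ℝ × ℝ) :
    Function.Injective (lowerTriangularMap a c d v) :=
  injective_affineMap_of_det_ne_zero (by rw [det_lowerTriangularMap]; exact mul_ne_zero ha hd)

theorem measurable_lowerTriangularMap (a c d : ℝ) (v : ℝ × ℝ) :
    Measurable (lowerTriangularMap a c d v) :=
  (AffineMap.continuous_of_finiteDimensional _).measurable

theorem image_lowerTriangularMap_leftHalfPlane {x : ℝ} (hx0 : 0 < x) (hx1 : x ≤ 1) :
    lowerTriangularMap x 0 1 0 '' T = leftHalfPlane x ∩ T := by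
  ext Y
  constructor
  · rintro ⟨Z, hZ, rfl⟩
    obtain ⟨h1, h2, h3⟩ := mem_T_iff.1 hZ
    simp only [lowerTriangularMap_apply, leftHalfPlane, mem_inter_iff, mem_ofPred_eq, mem_T_iff,
      Prod.fst_zero, Prod.snd_zero, zero_mul, one_mul, add_zero, zero_add]
    exact ⟨by nlinarith, by positivity, h2, by nlinarith⟩
  · rintro ⟨hYx, hY⟩
    obtain ⟨h1, h2, -⟩ := mem_T_iff.1 hY
    refine ⟨(Y.1 / x, Y.2), mem_T_iff.2 ⟨by positivity, h2, ?_⟩, ?_⟩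
    · rw [← le_sub_iff_add_le, div_le_iff₀ hx0]
      linarith [show Y.1 + x * Y.2 ≤ x from hYx]
    · simp [lowerTriangularMap_apply, mul_div_cancel₀ _ hx0.ne']

theorem image_lowerTriangularMap_corner {t : ℝ} (ht0 : 0 ≤ t) (ht1 : t < 1) :
    lowerTriangularMap 1 (-t) (1 - t) (0, t) '' T = {Y | t * (1 - Y.1) ≤ Y.2} ∩ T := by
  have h1t : 0 < 1 - t := sub_pos.2 ht1
  ext Y
  constructor
  · rintro ⟨Z, hZ, rfl⟩
    obtain ⟨h1, h2, h3⟩ := mem_T_iff.1 hZ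
    simp only [lowerTriangularMap_apply, mem_inter_iff, mem_ofPred_eq, mem_T_iff, one_mul, add_zero]
    exact ⟨by nlinarith, by linarith, by nlinarith, by nlinarith⟩
  · rintro ⟨hYt, hY⟩
    obtain ⟨h1, -, h3⟩ := mem_T_iff.1 hY
    refine ⟨(Y.1, (Y.2 - t * (1 - Y.1)) / (1 - t)),
      mem_T_iff.2 ⟨h1, div_nonneg (sub_nonneg.2 hYt) h1t.le, ?_⟩, ?_⟩
    · rw [← le_sub_iff_add_le', div_le_iff₀ h1t]
      linarith
    · rw [lowerTriangularMap_apply, mul_div_cancel₀ _ h1t.ne']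
      exact Prod.ext (by simp) (by simp only [neg_mul]; ring)

theorem μT_restrict_eq_map {f : ℝ × ℝ →ᵃ[ℝ] ℝ × ℝ} (hf : LinearMap.det f.linear ≠ 0)
    {D : Set (ℝ × ℝ)} (hD : MeasurableSet D) (hfT : f '' T = D ∩ T) :
    μT.restrict D = ENNReal.ofReal |LinearMap.det f.linear| • μT.map f := by
  rw [μT, Measure.restrict_smul, restrict_restrict_eq_map_affineMap volume hf hD hfT,
    Measure.map_smul, smul_comm]

theorem measurableSet_leftHalfPlane (x : ℝ) : MeasurableSet (leftHalfPlane x) :=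
  measurableSet_le (by fun_prop) measurable_const

theorem μT_restrict_leftHalfPlane {x : ℝ} (hx0 : 0 < x) (hx1 : x ≤ 1) :
    μT.restrict (leftHalfPlane x) = ENNReal.ofReal x • μT.map (lowerTriangularMap x 0 1 0) := by
  have hdet : LinearMap.det (lowerTriangularMap x 0 1 0).linear = x := by
    rw [det_lowerTriangularMap, mul_one]
  rw [μT_restrict_eq_map (by rw [hdet]; exact hx0.ne') (measurableSet_leftHalfPlane x)
    (image_lowerTriangularMap_leftHalfPlane hx0 hx1), hdet, abs_of_pos hx0]

theorem μT_leftHalfPlane_compl {x : ℝ} (hx0 : 0 < x) (hx1 : x ≤ 1) :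
    μT (leftHalfPlane x)ᶜ = ENNReal.ofReal (1 - x) := by
  rw [prob_compl_eq_one_sub (measurableSet_leftHalfPlane x), ← Measure.restrict_apply_univ,
    μT_restrict_leftHalfPlane hx0 hx1, Measure.smul_apply, Measure.map_apply
      (measurable_lowerTriangularMap x 0 1 0) .univ,
    preimage_univ, measure_univ, smul_eq_mul, mul_one, ENNReal.ofReal_sub 1 hx0.le,
    ENNReal.ofReal_one]

theorem μT_restrict_cornerSlope {t : ℝ} (ht0 : 0 ≤ t) (ht1 : t < 1) :
    μT.restrict {Y | t ≤ cornerSlope Y} =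
      ENNReal.ofReal (1 - t) • μT.map (lowerTriangularMap 1 (-t) (1 - t) (0, t)) := by
  have h1t : 0 < 1 - t := sub_pos.2 ht1
  have hdet : LinearMap.det (lowerTriangularMap 1 (-t) (1 - t) (0, t)).linear = 1 - t := by
    rw [det_lowerTriangularMap, one_mul]
  have hset : {Y | t ≤ cornerSlope Y} =ᵐ[μT] {Y | t * (1 - Y.1) ≤ Y.2} := by
    filter_upwards [ae_μT_fst_mem_Ioo] with Y hY
    exact propext (le_div_iff₀ (sub_pos.2 hY.2))
  rw [Measure.restrict_congr_set hset, μT_restrict_eq_map (by rw [hdet]; exact h1t.ne')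
    (measurableSet_le (by fun_prop) measurable_snd) (image_lowerTriangularMap_corner ht0 ht1),
    hdet, abs_of_pos h1t]

end Uniform

end Triangle

section Recurrence

open Set ENNReal
open Finset.HasAntidiagonal (antidiagonal)

instance (n : ℕ) : IsProbabilityMeasure (P n) :=
  inferInstanceAs (IsProbabilityMeasure (Measure.pi _))

variable (f : ℕ → ℝ≥0∞)

theorem measurableOnRanges_chainCount (a b : ℝ × ℝ) :
    MeasurableOnRanges fun S => f (chainCount a b S) := fun _ _ =>
  measurable_from_top.comp (measurable_chainCount_range a b)

theorem ae_P_forall {p : ℝ × ℝ → Prop} (hp : ∀ᵐ X ∂μT, p X) (n : ℕ) :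
    ∀ᵐ ω ∂P n, ∀ X ∈ range ω, p X := by
  simp only [forall_mem_range]
  exact ae_all_iff.2 fun i => (Measure.tendsto_eval_ae_ae (μ := fun _ => μT) (i := i)).eventually hp

theorem lintegral_chainCount_insert {x : ℝ} (hx : x ∈ Ioo 0 1) (n : ℕ) :
    ∫⁻ ω, f (chainCount (1, 0) (0, 1) (insert (x, 0) (range ω))) ∂P n =
      ∑ p ∈ antidiagonal n, (n.choose p.1 : ℝ≥0∞) *
        (ENNReal.ofReal (x ^ p.1 * (1 - x) ^ p.2) * ∫⁻ ω, f (N p.1 ω + 1) ∂P p.1) := by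
  have hpeel : ∀ᵐ ω ∂P n, f (chainCount (1, 0) (0, 1) (insert (x, 0) (range ω))) =
      f (chainCount (x, 0) (0, 1) (range ω ∩ leftHalfPlane x) + 1) := by
    filter_upwards [ae_P_forall ae_μT_mem_T n, ae_P_forall ae_μT_snd_pos n] with ω hT h0
    rw [chainCount_insert hx.1.le hx.2 hT h0 (finite_range ω)]
  have himage : ∀ W, chainCount (x, 0) (0, 1) (lowerTriangularMap x 0 1 0 '' W) =
      chainCount (1, 0) (0, 1) W := fun W => by
    rw [← chainCount_image _ (injective_lowerTriangularMap hx.1.ne' one_ne_zero 0 0) (1, 0) (0, 1)]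
    simp [lowerTriangularMap_apply]
  have hF := measurableOnRanges_chainCount (fun i => f (i + 1)) (x, 0) (0, 1)
  rw [lintegral_congr_ae hpeel, P,
    lintegral_pi_range_inter μT (measurableSet_leftHalfPlane x) hF]
  refine Finset.sum_congr rfl fun p _ => ?_
  rw [lintegral_pi_range_of_restrict_eq_map μT (measurable_lowerTriangularMap x 0 1 0)
      (μT_restrict_leftHalfPlane hx.1 hx.2.le) hF, μT_leftHalfPlane_compl hx.1 hx.2.le,
    mul_comm (x ^ p.1), ENNReal.ofReal_mul (pow_nonneg (sub_nonneg.2 hx.2.le) _),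
    ENNReal.ofReal_pow (sub_nonneg.2 hx.2.le), ENNReal.ofReal_pow hx.1.le, mul_assoc]
  simp only [himage]
  rfl

theorem lintegral_chainCount_insert_of_cornerSlope_le {X : ℝ × ℝ} (hX : X.1 < 1)
    (hX0 : 0 ≤ cornerSlope X) (hX1 : cornerSlope X < 1) (n : ℕ) :
    ∫⁻ ω in univ.pi fun _ => {Y | cornerSlope X ≤ cornerSlope Y},
        f (chainCount (1, 0) (0, 1) (insert X (range ω))) ∂P n =
      ENNReal.ofReal ((1 - cornerSlope X) ^ n) *
        ∫⁻ ω, f (chainCount (1, 0) (0, 1) (insert (X.1, 0) (range ω))) ∂P n := by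
  set t := cornerSlope X
  have h1t : 0 < 1 - t := sub_pos.2 hX1
  have hbase : lowerTriangularMap 1 (-t) (1 - t) (0, t) (X.1, 0) = X := by
    have hX2 : t * (1 - X.1) = X.2 := div_mul_cancel₀ _ (sub_pos.2 hX).ne'
    rw [lowerTriangularMap_apply]
    exact Prod.ext (by simp) (by simp only [neg_mul, mul_zero, add_zero]; linarith)
  have himage : ∀ W, chainCount (1, 0) (0, 1)
      (insert X (lowerTriangularMap 1 (-t) (1 - t) (0, t) '' W)) =
        chainCount (1, 0) (0, 1) (insert (X.1, 0) W) := fun W => by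
    rw [← chainCount_image _ (injective_lowerTriangularMap one_ne_zero h1t.ne' (-t) (0, t)) (1, 0)
      (0, 1) (insert _ W), image_insert_eq, hbase]
    simp [lowerTriangularMap_apply]
  rw [P, Measure.restrict_pi_pi, lintegral_pi_range_of_restrict_eq_map μT
    (measurable_lowerTriangularMap _ _ _ _) (μT_restrict_cornerSlope hX0 hX1)
    ((measurableOnRanges_chainCount f (1, 0) (0, 1)).insert X), ENNReal.ofReal_pow h1t.le]
  simp only [himage]

theorem ae_μT_cornerSlope_mem_Ico : ∀ᵐ X ∂μT, cornerSlope X ∈ Ico 0 1 := by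
  filter_upwards [ae_μT_mem_T, ae_μT_fst_mem_Ioo, compl_mem_ae_iff.2 (μT_cornerSlope_fiber 1)]
    with X hT hX hne
  obtain ⟨-, h2, h3⟩ := mem_T_iff.1 hT
  have h1X := sub_pos.2 hX.2
  exact ⟨div_nonneg h2 h1X.le, lt_of_le_of_ne ((div_le_one h1X).2 (by linarith)) hne⟩

theorem succ_mul_choose_mul_lintegral_μT (k l : ℕ) :
    (((k + l + 1) * (k + l).choose k : ℕ) : ℝ≥0∞) *
      ∫⁻ X, ENNReal.ofReal (X.1 ^ k * (1 - X.1) ^ l * (1 - cornerSlope X) ^ (k + l)) ∂μT =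
      ENNReal.ofReal (2 * (l + 1) / (((k + l : ℕ) + 1) * ((k + l : ℕ) + 2))) := by
  have hfact : ((k + l).choose k * k.factorial * l.factorial : ℝ) = (k + l).factorial := by
    rw [Nat.choose_symm_add]
    exact_mod_cast Nat.add_choose_mul_factorial_mul_factorial k l
  rw [lintegral_μT_pow_mul_cornerSlope, ← ENNReal.ofReal_natCast,
    ← ENNReal.ofReal_mul (Nat.cast_nonneg _), show k + (l + 1) + 1 = k + l + 1 + 1 by ring]
  congr 1
  rw [Nat.factorial_succ (k + l + 1), Nat.factorial_succ (k + l), Nat.factorial_succ l]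
  push_cast
  rw [← hfact]
  have hchoose : ((k + l).choose k : ℝ) ≠ 0 := by
    exact_mod_cast (Nat.choose_pos (Nat.le_add_right k l)).ne'
  field_simp
  ring

theorem lintegral_N_succ (n : ℕ) :
    ∫⁻ ω, f (N (n + 1) ω) ∂P (n + 1) =
      ∑ p ∈ antidiagonal n, ENNReal.ofReal (2 * (p.2 + 1) / ((n + 1) * (n + 2))) *
        ∫⁻ ω, f (N p.1 ω + 1) ∂P p.1 := by
  have hmin : ∀ᵐ X ∂μT, ∫⁻ ω in univ.pi fun _ => {Y | cornerSlope X ≤ cornerSlope Y},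
      f (chainCount (1, 0) (0, 1) (insert X (range ω))) ∂P n =
      ∑ p ∈ antidiagonal n,
        ENNReal.ofReal (X.1 ^ p.1 * (1 - X.1) ^ p.2 * (1 - cornerSlope X) ^ n) *
        ((n.choose p.1 : ℝ≥0∞) * ∫⁻ ω, f (N p.1 ω + 1) ∂P p.1) := by
    filter_upwards [ae_μT_fst_mem_Ioo, ae_μT_cornerSlope_mem_Ico] with X hX ht
    have ht1 := sub_nonneg.2 ht.2.le
    rw [lintegral_chainCount_insert_of_cornerSlope_le f hX.2 ht.1 ht.2,
      lintegral_chainCount_insert f hX, Finset.mul_sum]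
    refine Finset.sum_congr rfl fun p _ => ?_
    rw [mul_comm (X.1 ^ p.1 * _), ENNReal.ofReal_mul (pow_nonneg ht1 n)]
    ring
  have hmeas := measurable_cornerSlope
  have hN : ∫⁻ ω, f (N (n + 1) ω) ∂P (n + 1) = (n + 1) * ∫⁻ X,
      ∫⁻ ω in univ.pi fun _ => {Y | cornerSlope X ≤ cornerSlope Y},
        f (chainCount (1, 0) (0, 1) (insert X (range ω))) ∂P n ∂μT :=
    lintegral_pi_range_eq_mul_lintegral_min hmeas μT_cornerSlope_fiber
      (measurableOnRanges_chainCount f (1, 0) (0, 1)) n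
  rw [hN, lintegral_congr_ae hmin, lintegral_finsetSum _ fun p _ => by fun_prop, Finset.mul_sum]
  refine Finset.sum_congr rfl fun ⟨k, l⟩ hkl => ?_
  obtain rfl : k + l = n := Finset.HasAntidiagonal.mem_antidiagonal.1 hkl
  rw [lintegral_mul_const _ (by fun_prop), ← succ_mul_choose_mul_lintegral_μT]
  push_cast
  ring

theorem measurable_N (n : ℕ) : Measurable (N n) :=
  measurable_chainCount_range (1, 0) (0, 1)

theorem N_le (n : ℕ) (ω : Fin n → ℝ × ℝ) : N n ω ≤ n :=
  (chainCount_range_le (1, 0) (0, 1) ω).trans_eq (Fintype.card_fin n)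

theorem map_N_succ (n : ℕ) :
    (P (n + 1)).map (N (n + 1)) =
      ∑ p ∈ antidiagonal n, ENNReal.ofReal (2 * (p.2 + 1) / ((n + 1) * (n + 2))) •
        (P p.1).map fun ω => N p.1 ω + 1 := by
  refine Measure.ext_of_lintegral _ fun f hf => ?_
  rw [lintegral_map hf (measurable_N _), lintegral_N_succ, lintegral_finsetSum_measure]
  refine Finset.sum_congr rfl fun p _ => ?_
  rw [lintegral_smul_measure, lintegral_map hf ((measurable_N _).add_const 1), smul_eq_mul]

theorem integrable_N {n : ℕ} (f : ℕ → ℝ) : Integrable (fun ω => f (N n ω)) (P n) := by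
  refine .of_bound (measurable_from_top.comp (measurable_N n)).aestronglyMeasurable
    (∑ i ∈ Finset.range (n + 1), ‖f i‖) (.of_forall fun ω => ?_)
  exact Finset.single_le_sum (f := fun i => ‖f i‖) (fun _ _ => norm_nonneg _)
    (Finset.mem_range_succ_iff.2 (N_le n ω))

theorem G_zero (s : ℝ) : G 0 s = 1 := by
  simp [G, Nat.le_zero.1 (N_le 0 _)]

theorem G_succ (n : ℕ) (s : ℝ) :
    G (n + 1) s = 2 * s / ((n + 1) * (n + 2)) * ∑ p ∈ antidiagonal n, (p.2 + 1) * G p.1 s := by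
  have hpow : ∀ {μ : Measure ℕ}, AEStronglyMeasurable (fun i => s ^ i) μ :=
    measurable_from_top.aestronglyMeasurable
  have hshift : ∀ k, Measurable fun ω => N k ω + 1 := fun k => (measurable_N k).add_const 1
  rw [G, ← integral_map (measurable_N _).aemeasurable hpow, map_N_succ,
    integral_finsetSum_measure fun p _ => ?_, Finset.mul_sum]
  · refine Finset.sum_congr rfl fun p _ => ?_
    rw [integral_smul_measure, integral_map (hshift p.1).aemeasurable hpow,
      ENNReal.toReal_ofReal (by positivity), smul_eq_mul, G]
    simp only [pow_succ, integral_mul_const]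
    ring
  · refine .smul_measure ?_ ENNReal.ofReal_ne_top
    exact (integrable_map_measure hpow (hshift p.1).aemeasurable).2
      (integrable_N fun i => s ^ (i + 1))

end Recurrence

section PowerSeries

open Set Filter Topology

theorem summable_abs_mul_pow_of_abs_le_choose {a : ℕ → ℝ} {k : ℕ}
    (ha : ∀ n, |a n| ≤ (n + k).choose k) {w : ℝ} (hw : |w| < 1) :
    Summable fun n => |a n * w ^ n| := by
  refine Summable.of_nonneg_of_le (fun n => abs_nonneg _) (fun n => ?_)
    (summable_choose_mul_geometric_of_norm_lt_one k (r := |w|) (by rwa [Real.norm_eq_abs, abs_abs]))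
  rw [abs_mul, abs_pow]
  exact mul_le_mul_of_nonneg_right (ha n) (by positivity)

theorem analyticAt_tsum_mul_pow {a : ℕ → ℝ} {r x : ℝ} (hx : |x| < r)
    (ha : Summable fun n => |a n * r ^ n|) :
    AnalyticAt ℝ (fun x => ∑' n, a n * x ^ n) x := by
  have hr : 0 < r := (abs_nonneg x).trans_lt hx
  set p := FormalMultilinearSeries.ofScalars ℝ a with hp
  have hradius : ENNReal.ofReal r ≤ p.radius := by
    refine p.le_radius_of_summable_norm (r := r.toNNReal) ?_
    simpa [hp, FormalMultilinearSeries.ofScalars_norm, hr.le, abs_mul, abs_of_pos hr] using ha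
  have hball := p.hasFPowerSeriesOnBall ((ENNReal.ofReal_pos.2 hr).trans_le hradius)
  have hxball : x ∈ Metric.eball 0 p.radius :=
    Metric.eball_subset_eball hradius (by simpa [Metric.eball_ofReal] using hx)
  convert hball.analyticAt_of_mem hxball using 2 with y
  exact (FormalMultilinearSeries.ofScalars_sum_eq a y).symm

theorem analyticAt_tsum_mul_pow_of_abs_lt_one {a : ℕ → ℝ}
    (ha : ∀ w, |w| < 1 → Summable fun n => |a n * w ^ n|) {x : ℝ} (hx : |x| < 1) :
    AnalyticAt ℝ (fun x => ∑' n, a n * x ^ n) x := by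
  obtain ⟨r, hxr, hr⟩ := exists_between hx
  exact analyticAt_tsum_mul_pow hxr (ha r (by rwa [abs_of_pos ((abs_nonneg x).trans_lt hxr)]))

theorem hasSum_choose_mul_pow (j : ℕ) {r : ℝ} (hr : |r| < 1) :
    HasSum (fun n : ℕ => (n.choose j : ℝ) * r ^ n) (r ^ j / (1 - r) ^ (j + 1)) := by
  have hinit : ∑ i ∈ Finset.range j, (i.choose j : ℝ) * r ^ i = 0 :=
    Finset.sum_eq_zero fun i hi => by simp [Nat.choose_eq_zero_of_lt (Finset.mem_range.1 hi)]
  have hterm : ∀ n, ((n + j).choose j : ℝ) * r ^ (n + j) = r ^ j * ((n + j).choose j * r ^ n) :=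
    fun n => by rw [pow_add]; ring
  rw [← hasSum_nat_add_iff' j, hinit, sub_zero, ← mul_one_div]
  simpa only [hterm] using (hasSum_choose_mul_geometric_of_norm_lt_one j hr).mul_left (r ^ j)

end PowerSeries

section EulerTransform

open Set Filter Topology

/-- The binomial transform `∑ⱼ C(n, j) fⱼ` of a sequence, which on generating functions acts as the
substitution `z ↦ z / (1 - z)`. -/
def binTransform {R : Type*} [CommSemiring R] (f : ℕ → R) (n : ℕ) : R :=
  ∑ j ∈ Finset.range (n + 1), (n.choose j : R) * f j

section Algebra

variable {R : Type*} [CommSemiring R] (f g : ℕ → R) (n : ℕ)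

theorem binTransform_zero : binTransform f 0 = f 0 := by
  simp [binTransform]

theorem binTransform_add : binTransform (f + g) n = binTransform f n + binTransform g n := by
  simp [binTransform, mul_add, Finset.sum_add_distrib]

theorem binTransform_const_mul (r : R) :
    binTransform (fun j => r * f j) n = r * binTransform f n := by
  simp only [binTransform, Finset.mul_sum, mul_left_comm]

theorem binTransform_succ :
    binTransform f (n + 1) = binTransform f n + binTransform (fun j => f (j + 1)) n := by
  have hlast : binTransform f n = ∑ j ∈ Finset.range (n + 1 + 1), (n.choose j : R) * f j := by
    simp [binTransform, Finset.sum_range_succ _ (n + 1)]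
  rw [hlast, binTransform, binTransform, Finset.sum_range_succ', Finset.sum_range_succ' _ (n + 1)]
  simp only [Nat.choose_succ_succ, Nat.cast_add, add_mul, Finset.sum_add_distrib,
    Nat.choose_zero_right]
  ring

theorem succ_mul_binTransform_shift :
    (n + 1) * binTransform (fun j => f (j + 1)) n = binTransform (fun j => j * f j) (n + 1) := by
  rw [binTransform, binTransform, Finset.sum_range_succ' _ (n + 1), Finset.mul_sum]
  have hchoose : ∀ j : ℕ, ((n : R) + 1) * n.choose j = (n + 1).choose (j + 1) * (j + 1) := by
    intro j
    simpa using congrArg (Nat.cast : ℕ → R) (Nat.add_one_mul_choose_eq n j)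
  simp only [← mul_assoc, hchoose]
  simp

end Algebra

theorem hasSum_choose_mul_mul_pow (a : ℝ) (j : ℕ) {r : ℝ} (hr : |r| < 1) :
    HasSum (fun n : ℕ => (n.choose j : ℝ) * a * r ^ n) ((1 - r)⁻¹ * (a * (r / (1 - r)) ^ j)) := by
  have hterm : ∀ n : ℕ, (n.choose j : ℝ) * a * r ^ n = a * (n.choose j * r ^ n) := fun n => by
    ring
  have hvalue : (1 - r)⁻¹ * (a * (r / (1 - r)) ^ j) = a * (r ^ j / (1 - r) ^ (j + 1)) := by
    rw [div_pow, pow_succ, div_mul_eq_div_div]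
    ring
  simpa only [hterm, hvalue] using (hasSum_choose_mul_pow j hr).mul_left a

theorem summable_choose_mul_mul_pow {f : ℕ → ℝ}
    (hf : ∀ w, |w| < 1 → Summable fun j => |f j * w ^ j|) {z : ℝ} (hz : |z| < 1 / 2) :
    Summable fun p : ℕ × ℕ => (p.2.choose p.1 : ℝ) * f p.1 * z ^ p.2 := by
  have hrow := fun j => hasSum_choose_mul_mul_pow |f j| j (r := |z|) (by rw [abs_abs]; linarith)
  have hw0 : 0 ≤ |z| / (1 - |z|) := div_nonneg (abs_nonneg z) (by linarith)
  have hw : |(|z| / (1 - |z|))| < 1 := by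
    rw [abs_of_nonneg hw0, div_lt_one] <;> linarith
  have hnorm : ∀ j n : ℕ, ‖(n.choose j : ℝ) * f j * z ^ n‖ = n.choose j * |f j| * |z| ^ n :=
    fun j n => by simp
  refine .of_norm ((summable_prod_of_nonneg fun _ => norm_nonneg _).2 ?_)
  simp only [hnorm]
  refine ⟨fun j => (hrow j).summable, ?_⟩
  simp only [fun j => (hrow j).tsum_eq]
  simpa only [abs_mul, abs_pow, abs_of_nonneg hw0] using (hf _ hw).mul_left (1 - |z|)⁻¹

theorem tsum_binTransform_mul_pow_of_abs_lt_half {f : ℕ → ℝ}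
    (hf : ∀ w, |w| < 1 → Summable fun j => |f j * w ^ j|) {z : ℝ} (hz : |z| < 1 / 2) :
    ∑' n, binTransform f n * z ^ n = (1 - z)⁻¹ * ∑' j, f j * (z / (1 - z)) ^ j := by
  have hrow : ∀ n, binTransform f n * z ^ n = ∑' j, (n.choose j : ℝ) * f j * z ^ n := fun n => by
    rw [tsum_mul_right, binTransform, tsum_eq_sum]
    intro j hj
    simp [Nat.choose_eq_zero_of_lt (n := n) (k := j) (by simpa using hj)]
  calc ∑' n, binTransform f n * z ^ n
      = ∑' n : ℕ, ∑' j, (n.choose j : ℝ) * f j * z ^ n := tsum_congr hrow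
    _ = ∑' j, ∑' n : ℕ, (n.choose j : ℝ) * f j * z ^ n :=
        Summable.tsum_comm (f := fun j n : ℕ => (n.choose j : ℝ) * f j * z ^ n)
          (summable_choose_mul_mul_pow hf hz)
    _ = ∑' j, (1 - z)⁻¹ * (f j * (z / (1 - z)) ^ j) :=
        tsum_congr fun j => (hasSum_choose_mul_mul_pow (f j) j (by linarith)).tsum_eq
    _ = (1 - z)⁻¹ * ∑' j, f j * (z / (1 - z)) ^ j := tsum_mul_left

theorem abs_div_one_sub_lt_one {x : ℝ} (hx : x < 1 / 2) : |x / (1 - x)| < 1 := by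
  have h : 0 < 1 - x := by linarith
  rw [abs_div, div_lt_one (abs_pos.2 h.ne'), abs_of_pos h, abs_lt]
  constructor <;> linarith

-- The double series behind the rearrangement converges absolutely only for `|z| < 1/2`; the
-- identity extends to `-1 < z < 1/2` by analyticity.
theorem tsum_binTransform_mul_pow {f : ℕ → ℝ}
    (hf : ∀ w, |w| < 1 → Summable fun j => |f j * w ^ j|)
    (hbin : ∀ w, |w| < 1 → Summable fun n => |binTransform f n * w ^ n|) {z : ℝ} (hz : |z| < 1)
    (hz2 : z < 1 / 2) :
    ∑' n, binTransform f n * z ^ n = (1 - z)⁻¹ * ∑' j, f j * (z / (1 - z)) ^ j := by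
  have hne : ∀ x ∈ Ioo (-1 : ℝ) (1 / 2), 1 - x ≠ 0 := fun x hx => by linarith [hx.2]
  have hleft : AnalyticOnNhd ℝ (fun x => ∑' n, binTransform f n * x ^ n) (Ioo (-1) (1 / 2)) :=
    fun x hx => analyticAt_tsum_mul_pow_of_abs_lt_one hbin (abs_lt.2 ⟨hx.1, by linarith [hx.2]⟩)
  have hright : AnalyticOnNhd ℝ (fun x => (1 - x)⁻¹ * ∑' j, f j * (x / (1 - x)) ^ j)
      (Ioo (-1) (1 / 2)) := fun x hx => by
    have hdenom : AnalyticAt ℝ (fun x : ℝ => 1 - x) x := analyticAt_const.sub analyticAt_id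
    exact (hdenom.inv (hne x hx)).mul <|
      (analyticAt_tsum_mul_pow_of_abs_lt_one hf (abs_div_one_sub_lt_one hx.2)).fun_comp
        (f := fun x : ℝ => x / (1 - x)) (analyticAt_id.div hdenom (hne x hx))
  refine hleft.eqOn_of_preconnected_of_eventuallyEq hright isPreconnected_Ioo (z₀ := 0)
    (by norm_num) ?_ ⟨(abs_lt.1 hz).1, hz2⟩
  filter_upwards [Metric.ball_mem_nhds (0 : ℝ) one_half_pos] with x hx
  exact tsum_binTransform_mul_pow_of_abs_lt_half hf (by simpa using hx)

theorem sum_range_mul_pow_eq (a : ℕ → ℝ) (z : ℝ) (n : ℕ) :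
    (∑ k ∈ Finset.range (n + 1), a k) * z ^ n =
      ∑ k ∈ Finset.range (n + 1), a k * z ^ k * z ^ (n - k) := by
  rw [Finset.sum_mul]
  refine Finset.sum_congr rfl fun k hk => ?_
  rw [mul_assoc, ← pow_add, Nat.add_sub_cancel' (Finset.mem_range_succ_iff.1 hk)]

theorem summable_abs_sum_range_mul_pow {a : ℕ → ℝ} {z : ℝ}
    (ha : Summable fun n => |a n * z ^ n|) (hz : |z| < 1) :
    Summable fun n => |(∑ k ∈ Finset.range (n + 1), a k) * z ^ n| := by
  simp only [sum_range_mul_pow_eq]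
  exact summable_norm_sum_mul_range_of_summable_norm (f := fun n => a n * z ^ n)
    (g := fun n => z ^ n) ha (by simpa using summable_geometric_of_lt_one (abs_nonneg z) hz)

theorem tsum_sum_range_mul_pow {a : ℕ → ℝ} {z : ℝ} (ha : Summable fun n => |a n * z ^ n|)
    (hz : |z| < 1) :
    ∑' n, (∑ k ∈ Finset.range (n + 1), a k) * z ^ n = (1 - z)⁻¹ * ∑' n, a n * z ^ n := by
  have hgeom : Summable fun n => ‖z ^ n‖ := by
    simpa using summable_geometric_of_lt_one (abs_nonneg z) hz
  simp only [sum_range_mul_pow_eq]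
  rw [← tsum_mul_tsum_eq_tsum_sum_range_of_summable_norm (f := fun n => a n * z ^ n) ha hgeom,
    tsum_geometric_of_abs_lt_one hz, mul_comm]

end EulerTransform

section Hypergeometric

open Finset.HasAntidiagonal (antidiagonal)

/-- The coefficients `(β)ₘ (1 - β)ₘ / ((2)ₘ m!)` of the Gauss series `F(β, 1 - β; 2; ·)`, where
`β (1 - β) = -2 s`. -/
def hypCoeff (s : ℝ) (m : ℕ) : ℝ :=
  (∏ i ∈ Finset.range m, ((i : ℝ) * ((i : ℝ) + 1) - 2 * s)) /
    ((m.factorial : ℝ) * ((m + 1).factorial : ℝ))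

theorem hypCoeff_zero (s : ℝ) : hypCoeff s 0 = 1 := by
  simp [hypCoeff]

theorem hypCoeff_one (s : ℝ) : hypCoeff s 1 = -s := by
  norm_num [hypCoeff, neg_div]

theorem hypCoeff_succ (s : ℝ) (m : ℕ) :
    (m + 1) * (m + 2) * hypCoeff s (m + 1) = (m * (m + 1) - 2 * s) * hypCoeff s m := by
  rw [hypCoeff, hypCoeff, Finset.prod_range_succ, Nat.factorial_succ (m + 1), Nat.factorial_succ m]
  push_cast
  field_simp
  ring

theorem abs_hypCoeff_le {s : ℝ} {k : ℕ} (hs : |s| ≤ k + 1) (m : ℕ) :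
    |hypCoeff s m| ≤ (m + k).choose k := by
  induction m with
  | zero => simp [hypCoeff_zero]
  | succ m ih =>
    have hnum : |m * (m + 1) - 2 * s| ≤ (m + 2) * (m + k + 1) := by
      rw [abs_le]
      constructor <;> nlinarith [abs_le.1 hs]
    have hchoose : ((m + k).choose k : ℝ) * (m + k + 1) = (m + 1 + k).choose k * (m + 1) := by
      have h := Nat.choose_mul_succ_eq (m + k) k
      rw [Nat.add_right_comm, Nat.add_sub_cancel] at h
      rw [add_right_comm]
      exact_mod_cast h
    refine le_of_mul_le_mul_left (a := ((m + 1) * (m + 2) : ℝ)) ?_ (by positivity)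
    calc (m + 1) * (m + 2) * |hypCoeff s (m + 1)|
        = |m * (m + 1) - 2 * s| * |hypCoeff s m| := by
          rw [← abs_mul, ← hypCoeff_succ, abs_mul ((m + 1) * (m + 2) : ℝ),
            abs_of_pos (by positivity : (0 : ℝ) < (m + 1) * (m + 2))]
      _ ≤ (m + 2) * (m + k + 1) * (m + k).choose k := by gcongr
      _ = (m + 1) * (m + 2) * (m + 1 + k).choose k := by linear_combination (m + 2 : ℝ) * hchoose

theorem second_difference_binTransform {R : Type*} [CommRing R] (f : ℕ → R) (n : ℕ) :
    (n + 3) * (n + 2) * (binTransform f (n + 2) - binTransform f (n + 1)) -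
        (n + 2) * (n + 1) * (binTransform f (n + 1) - binTransform f n) =
      binTransform (fun j => j * (j + 1) * f j) (n + 1) +
        binTransform (fun j => (j + 1) * (j + 2) * f (j + 1)) (n + 1) := by
  have hstep : ∀ (g : ℕ → R) (m : ℕ),
      (m + 1) * (binTransform g (m + 1) - binTransform g m) =
        binTransform (fun j => j * g j) (m + 1) := fun g m => by
    rw [← succ_mul_binTransform_shift, binTransform_succ, add_sub_cancel_left]
  have hsplit : (fun j : ℕ => j * (j + 1) * f j) =
      (fun j : ℕ => j * (j * f j)) + fun j : ℕ => j * f j := by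
    ext j
    simp only [Pi.add_apply]
    ring
  have hsum := binTransform_add (fun j : ℕ => j * (j * f j)) (fun j => j * f j) (n + 2)
  have hshift := binTransform_succ (fun j : ℕ => j * (j + 1) * f j) (n + 1)
  have hu₀ := hstep f n
  have hu₁ := hstep f (n + 1)
  have hv := hstep (fun j => j * f j) (n + 1)
  rw [← hsplit] at hsum
  push_cast [add_assoc, one_add_one_eq_two] at hu₁ hv hshift
  linear_combination (n + 3) * hu₁ - (n + 2) * hu₀ + hv - hsum + hshift

theorem second_difference_binTransform_hypCoeff (s : ℝ) (n : ℕ) :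
    let u := binTransform fun j => (-1) ^ j * hypCoeff s j
    (n + 3) * (n + 2) * (u (n + 2) - u (n + 1)) - (n + 2) * (n + 1) * (u (n + 1) - u n) =
      2 * s * u (n + 1) := by
  simp only [second_difference_binTransform]
  rw [← binTransform_add, ← binTransform_const_mul]
  congr 1
  ext j
  have h := hypCoeff_succ s j
  simp only [Pi.add_apply]
  rw [pow_succ]
  linear_combination -(-1) ^ j * h

theorem sum_antidiagonal_snd_add_one_mul {R : Type*} [CommSemiring R] (g : ℕ → R) (n : ℕ) :
    ∑ p ∈ antidiagonal n, (p.2 + 1) * g p.1 =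
      ∑ k ∈ Finset.range (n + 1), ∑ j ∈ Finset.range (k + 1), g j := by
  induction n with
  | zero => simp
  | succ n ih =>
    have hsum : ∑ p ∈ antidiagonal n, g p.1 = ∑ j ∈ Finset.range (n + 1), g j :=
      Finset.Nat.sum_antidiagonal_eq_sum_range_succ_mk (fun p => g p.1) n
    have hsplit : ∑ p ∈ antidiagonal n, (↑(p.2 + 1) + 1) * g p.1 =
        ∑ p ∈ antidiagonal n, (p.2 + 1) * g p.1 + ∑ p ∈ antidiagonal n, g p.1 := by
      rw [← Finset.sum_add_distrib]
      exact Finset.sum_congr rfl fun p _ => by push_cast; ring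
    rw [Finset.Nat.sum_antidiagonal_succ', hsplit, ih, hsum, Finset.sum_range_succ _ (n + 1),
      Finset.sum_range_succ _ (n + 1), Nat.cast_zero, zero_add, one_mul, ← add_comm, add_assoc]

theorem G_succ_eq_sum_sum (n : ℕ) (s : ℝ) :
    (n + 1) * (n + 2) * G (n + 1) s =
      2 * s * ∑ k ∈ Finset.range (n + 1), ∑ j ∈ Finset.range (k + 1), G j s := by
  rw [G_succ, sum_antidiagonal_snd_add_one_mul fun j => G j s]
  field_simp

theorem G_one (s : ℝ) : G 1 s = s := by
  simpa [G_zero] using G_succ_eq_sum_sum 0 s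

theorem sum_range_sum_range_choose (k n : ℕ) :
    ∑ m ∈ Finset.range (n + 1), ∑ j ∈ Finset.range (m + 1), (j + k).choose k =
      (n + k + 2).choose (k + 2) := by
  simp only [Nat.sum_range_add_choose, add_assoc _ k 1]
  rfl

theorem two_mul_choose_add_two_le (n k : ℕ) :
    2 * (k + 1) * (n + k + 2).choose (k + 2) ≤ (n + 1) * (n + 2) * (n + 1 + k).choose k := by
  have h₁ : (n + k + 2) * (n + k + 1).choose (k + 1) = (n + k + 2).choose (k + 2) * (k + 2) :=
    Nat.add_one_mul_choose_eq (n + k + 1) (k + 1)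
  have h₂ : (n + k + 1).choose (k + 1) * (k + 1) = (n + 1 + k).choose k * (n + 1) := by
    rw [Nat.choose_succ_right_eq, add_right_comm, Nat.add_sub_cancel]
  refine Nat.le_of_mul_le_mul_right (c := k + 2) ?_ (by positivity)
  calc 2 * (k + 1) * (n + k + 2).choose (k + 2) * (k + 2)
      = (2 * n + 2 * k + 4) * ((n + 1 + k).choose k * (n + 1)) := by
        rw [← h₂, mul_assoc, ← h₁]
        ring
    _ ≤ ((n + 2) * (k + 2)) * ((n + 1 + k).choose k * (n + 1)) := by
        gcongr
        nlinarith [Nat.zero_le (n * k)]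
    _ = (n + 1) * (n + 2) * (n + 1 + k).choose k * (k + 2) := by ring

theorem abs_G_le {s : ℝ} {k : ℕ} (hs : |s| ≤ k + 1) (n : ℕ) : |G n s| ≤ (n + k).choose k := by
  induction n using Nat.strong_induction_on with
  | _ n ih =>
    rcases n with - | n
    · simp [G_zero]
    have hsum : |∑ m ∈ Finset.range (n + 1), ∑ j ∈ Finset.range (m + 1), G j s| ≤
        (n + k + 2).choose (k + 2) := by
      rw [← sum_range_sum_range_choose]
      push_cast
      refine (Finset.abs_sum_le_sum_abs _ _).trans (Finset.sum_le_sum fun m hm => ?_)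
      refine (Finset.abs_sum_le_sum_abs _ _).trans (Finset.sum_le_sum fun j hj => ih j ?_)
      exact (Finset.mem_range.1 hj).trans_le (Finset.mem_range.1 hm)
    refine le_of_mul_le_mul_left (a := ((n + 1) * (n + 2) : ℝ)) ?_ (by positivity)
    calc (n + 1) * (n + 2) * |G (n + 1) s|
        = 2 * |s| * |∑ m ∈ Finset.range (n + 1), ∑ j ∈ Finset.range (m + 1), G j s| := by
          rw [show 2 * |s| = |2 * s| by rw [abs_mul, abs_two], ← abs_mul, ← G_succ_eq_sum_sum,
            abs_mul ((n + 1) * (n + 2) : ℝ),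
            abs_of_pos (by positivity : (0 : ℝ) < (n + 1) * (n + 2))]
      _ ≤ 2 * (k + 1) * (n + k + 2).choose (k + 2) := by gcongr
      _ ≤ (n + 1) * (n + 2) * (n + 1 + k).choose k := mod_cast two_mul_choose_add_two_le n k

theorem second_difference_sum_range_G (s : ℝ) (n : ℕ) :
    (n + 3) * (n + 2) * G (n + 2) s - (n + 2) * (n + 1) * G (n + 1) s =
      2 * s * ∑ k ∈ Finset.range (n + 2), G k s := by
  have h₀ := G_succ_eq_sum_sum n s
  have h₁ := G_succ_eq_sum_sum (n + 1) s
  rw [Finset.sum_range_succ _ (n + 1)] at h₁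
  push_cast [add_assoc, one_add_one_eq_two] at h₀ h₁
  linear_combination h₁ - h₀

theorem sum_range_G_eq_binTransform (s : ℝ) (n : ℕ) :
    ∑ k ∈ Finset.range (n + 1), G k s = binTransform (fun j => (-1) ^ j * hypCoeff s j) n := by
  induction n using Nat.twoStepInduction with
  | zero => simp [binTransform_zero, hypCoeff_zero, G_zero]
  | one =>
    simp [binTransform, Finset.sum_range_succ, hypCoeff_zero, hypCoeff_one, G_zero, G_one]
  | more n h₀ h₁ =>
    have hG := second_difference_sum_range_G s n
    have hhyp := second_difference_binTransform_hypCoeff s n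
    rw [Finset.sum_range_succ, h₁]
    have hdiff := Finset.sum_range_succ (fun k => G k s) (n + 1)
    rw [h₁, h₀] at hdiff
    rw [h₁] at hG
    refine mul_left_cancel₀ (by positivity : ((n : ℝ) + 3) * (n + 2) ≠ 0) ?_
    linear_combination hG - hhyp - (n + 2) * (n + 1) * hdiff

theorem summable_abs_G_mul_pow (s : ℝ) {w : ℝ} (hw : |w| < 1) :
    Summable fun n => |G n s * w ^ n| :=
  summable_abs_mul_pow_of_abs_le_choose (k := ⌈|s|⌉₊)
    (abs_G_le ((Nat.le_ceil |s|).trans (lt_add_one _).le)) hw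

theorem summable_abs_hypCoeff_mul_pow (s : ℝ) {w : ℝ} (hw : |w| < 1) :
    Summable fun m => |hypCoeff s m * w ^ m| :=
  summable_abs_mul_pow_of_abs_le_choose (k := ⌈|s|⌉₊)
    (abs_hypCoeff_le ((Nat.le_ceil |s|).trans (lt_add_one _).le)) hw

theorem abs_div_sub_one_lt_one {z : ℝ} (hz : z < 1 / 2) : |z / (z - 1)| < 1 := by
  rw [← neg_sub, div_neg, abs_neg]
  exact abs_div_one_sub_lt_one hz

theorem tsum_G_mul_pow (s : ℝ) {z : ℝ} (hz : |z| < 1) (hz2 : z < 1 / 2) :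
    ∑' n, G n s * z ^ n = ∑' m, hypCoeff s m * (z / (z - 1)) ^ m := by
  have hz1 : 1 - z ≠ 0 := by linarith
  have hhyp : ∀ w, |w| < 1 → Summable fun j => |(-1) ^ j * hypCoeff s j * w ^ j| := fun w hw => by
    simpa [abs_mul] using summable_abs_hypCoeff_mul_pow s hw
  have hbin : ∀ w, |w| < 1 →
      Summable fun n => |binTransform (fun j => (-1) ^ j * hypCoeff s j) n * w ^ n| := by
    intro w hw
    simpa only [sum_range_G_eq_binTransform] using
      summable_abs_sum_range_mul_pow (summable_abs_G_mul_pow s hw) hw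
  have hsign : ∀ j : ℕ,
      (-1) ^ j * hypCoeff s j * (z / (1 - z)) ^ j = hypCoeff s j * (z / (z - 1)) ^ j := fun j => by
    rw [← neg_sub z 1, div_neg, neg_pow (z / (z - 1)), mul_mul_mul_comm, mul_left_comm,
      ← mul_assoc, ← mul_pow, neg_one_mul, neg_neg, one_pow, mul_one]
  have hpartial := tsum_sum_range_mul_pow (summable_abs_G_mul_pow s hz) hz
  simp only [sum_range_G_eq_binTransform] at hpartial
  rw [tsum_binTransform_mul_pow hhyp hbin hz hz2] at hpartial
  rw [← mul_left_cancel₀ (inv_ne_zero hz1) hpartial, tsum_congr hsign]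

end Hypergeometric

theorem inv_abs_add_abs_one_sub_le_one (s : ℝ) : (|s| + |1 - s|)⁻¹ ≤ 1 :=
  inv_le_one_of_one_le₀ (by simpa using abs_add_le s (1 - s))

theorem stmt6_general (s z : ℝ) (hz : |z| < 1) (hz2 : z < 1 / 2) :
    Summable (fun l : ℕ => |z ^ l * G l s|) ∧
    Summable (fun m : ℕ =>
      |(∏ i ∈ Finset.range m, ((i : ℝ) * ((i : ℝ) + 1) - 2 * s)) /
          ((m.factorial : ℝ) * ((m + 1).factorial : ℝ)) * (z / (z - 1)) ^ m|) ∧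
    (∑' l : ℕ, z ^ l * G l s
      = ∑' m : ℕ, (∏ i ∈ Finset.range m, ((i : ℝ) * ((i : ℝ) + 1) - 2 * s)) /
          ((m.factorial : ℝ) * ((m + 1).factorial : ℝ)) * (z / (z - 1)) ^ m) := by
  simp only [mul_comm (z ^ _)]
  exact ⟨summable_abs_G_mul_pow s hz, summable_abs_hypCoeff_mul_pow s (abs_div_sub_one_lt_one hz2),
    tsum_G_mul_pow s hz hz2⟩

/-- for `|z| < (|s| + |1-s|)⁻¹` and `z < 1/2`, the series `Σ z^ℓ G_ℓ(s)`
converges absolutely and equals the (absolutely convergent) Gauss hypergeometric series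
`Σ_m (Π_{i=0}^{m-1}(i(i+1) - 2s)) / (m!(m+1)!) · (z/(z-1))^m`. -/
theorem stmt6 (s z : ℝ) (hz : |z| < (|s| + |1 - s|)⁻¹) (hz2 : z < 1 / 2) :
    Summable (fun l : ℕ => |z ^ l * G l s|) ∧
    Summable (fun m : ℕ =>
      |(∏ i ∈ Finset.range m, ((i : ℝ) * ((i : ℝ) + 1) - 2 * s)) /
          ((m.factorial : ℝ) * ((m + 1).factorial : ℝ)) * (z / (z - 1)) ^ m|) ∧
    (∑' l : ℕ, z ^ l * G l s
      = ∑' m : ℕ, (∏ i ∈ Finset.range m, ((i : ℝ) * ((i : ℝ) + 1) - 2 * s)) /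
          ((m.factorial : ℝ) * ((m + 1).factorial : ℝ)) * (z / (z - 1)) ^ m) :=
  stmt6_general s z (hz.trans_le (inv_abs_add_abs_one_sub_le_one s)) hz2

end
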